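/- arXiv:2102.04239 — 5 statements merged into one kernel-verified Lean document; each statement's English description precedes it below -/
import Mathlib

section
/- Let X be a finite simple connected graph with a spanning tree T, and let f be an automorphism of X whose induced action on the first homology group H_1(X, ℤ) is the identity (equivalently, the matrix M_T(f) with respect to the basis of fundamental cycles of T is the identity). Then f fixes each fundamental oriented cycle C_i of T setwise. -/
open SimpleGraph
variable {V : Type*}

variable {V : Type*}

/-- The cycle space (= first homology with coefficients in `R`) of a graph,
realized as antisymmetric flows supported on edges with zero divergence. -/
def cycleSpace (R : Type*) [CommRing R] [Fintype V] (G : SimpleGraph V) :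
    Submodule R (V → V → R) where
  carrier := {f | (∀ u v, ¬ G.Adj u v → f u v = 0) ∧ (∀ u v, f u v = - f v u) ∧
    (∀ u, ∑ v, f u v = 0)}
  add_mem' := by
    rintro f g ⟨hf1, hf2, hf3⟩ ⟨hg1, hg2, hg3⟩
    refine ⟨fun u v h => by simp [hf1 u v h, hg1 u v h], fun u v => ?_, fun u => ?_⟩
    · simp only [Pi.add_apply]; rw [hf2 u v, hg2 u v]; ring
    · simp [Finset.sum_add_distrib, hf3 u, hg3 u]
  zero_mem' := ⟨fun _ _ _ => rfl, fun _ _ => by simp, fun _ => by simp⟩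
  smul_mem' := by
    rintro c f ⟨h1, h2, h3⟩
    refine ⟨fun u v h => by simp [h1 u v h], fun u v => by simp [h2 u v], fun u => ?_⟩
    simp only [Pi.smul_apply, smul_eq_mul]
    rw [← Finset.mul_sum, h3 u, mul_zero]

/-- An automorphism acts trivially (as the identity) on `H_1(X,R)`. -/
def FixesH1 (R : Type*) [CommRing R] [Fintype V] (G : SimpleGraph V) (f : G ≃g G) : Prop :=
  ∀ c ∈ cycleSpace R G, ∀ u v : V, c (f u) (f v) = c u v

open Classical in
/-- The integral flow carried by a walk. -/
noncomputable def walkFlow {W : Type*} {G : SimpleGraph W} :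
    {a b : W} → G.Walk a b → W → W → ℤ
  | _, _, Walk.nil => fun _ _ => 0
  | _, _, @Walk.cons _ _ a b _ _ q => fun u v =>
      (if u = a ∧ v = b then 1 else 0) - (if u = b ∧ v = a then 1 else 0) + walkFlow q u v

theorem walkFlow_antisymm {W : Type*} {G : SimpleGraph W} {a b : W} (w : G.Walk a b) (u v : W) :
    walkFlow w u v = - walkFlow w v u := by
  induction w with
  | nil => simp [walkFlow]
  | cons h q ih =>
    simp only [walkFlow]
    rw [ih]
    split_ifs <;> first | omega | (exfalso; tauto)

open Classical in
theorem walkFlow_sum {W : Type*} [Fintype W] {G : SimpleGraph W} {a b : W} (w : G.Walk a b)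
    (u : W) :
    ∑ v, walkFlow w u v = (if u = a then 1 else 0) - (if u = b then 1 else 0) := by
  induction w with
  | nil => simp [walkFlow]
  | cons h q ih =>
    simp only [walkFlow, Finset.sum_add_distrib, Finset.sum_sub_distrib, ih, ite_and]
    split_ifs <;> simp

theorem walkFlow_ne_zero {W : Type*} {G : SimpleGraph W} {a b : W} (w : G.Walk a b)
    (hw : w.IsTrail) (u v : W) : walkFlow w u v ≠ 0 ↔ s(u, v) ∈ w.edges := by
  induction w with
  | nil => simp [walkFlow]
  | @cons a b c h q ih =>
    rw [Walk.isTrail_cons] at hw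
    have ih := ih hw.1
    have hne := h.ne
    have hmem := hw.2
    simp only [walkFlow, Walk.edges_cons, List.mem_cons]
    by_cases h1 : u = a ∧ v = b
    · obtain ⟨rfl, rfl⟩ := h1
      have : walkFlow q u v = 0 := by
        by_contra hh
        exact hmem (ih.1 hh)
      simp [this, hne]
    · by_cases h2 : u = b ∧ v = a
      · obtain ⟨rfl, rfl⟩ := h2
        have : walkFlow q u v = 0 := by
          by_contra hh
          exact hmem (Sym2.eq_swap ▸ ih.1 hh)
        simp [this, hne, hne.symm, Sym2.eq_swap]
      · have h3 : ¬ (s(u, v) = s(a, b)) := by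
          rw [Sym2.eq_iff]; tauto
        simp only [h1, h2, h3, if_false, false_or, sub_zero, zero_add]
        exact ih

theorem kernel_fixes_fundamental_cycles_setwise [Fintype V]
    (G : SimpleGraph V) (hG : G.Connected)
    (T : SimpleGraph V) (hTG : T ≤ G) (hT : T.IsTree)
    (f : G ≃g G) (hf : FixesH1 ℤ G f)
    -- a cotree dart `(a,b)` and the unique path in `T` from `b` to `a`
    {a b : V} (hab : G.Adj a b) (hnT : ¬ T.Adj a b)
    (p : T.Walk b a) (hp : p.IsPath) :
    -- `f` fixes the fundamental oriented cycle setwise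
    ((Walk.cons hab (p.mapLe hTG)).toSubgraph).map f.toHom
      = (Walk.cons hab (p.mapLe hTG)).toSubgraph := by
  classical
  have htr : (Walk.cons hab (p.mapLe hTG)).IsTrail := by
    rw [Walk.isTrail_cons]
    refine ⟨(hp.mapLe hTG).isTrail, fun h => hnT ?_⟩
    rw [Walk.edges_mapLe_eq_edges] at h
    exact p.adj_of_mem_edges h
  have hnn : ¬ (Walk.cons hab (p.mapLe hTG)).Nil := Walk.not_nil_cons
  generalize Walk.cons hab (p.mapLe hTG) = w at htr hnn
  have hc : walkFlow w ∈ cycleSpace ℤ G := by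
    refine ⟨fun u v huv => ?_, walkFlow_antisymm w, fun u => ?_⟩
    · by_contra hh
      exact huv (w.adj_of_mem_edges ((walkFlow_ne_zero w htr u v).1 hh))
    · rw [walkFlow_sum]; simp
  have hadj : ∀ u v, w.toSubgraph.Adj (f u) (f v) ↔ w.toSubgraph.Adj u v := by
    intro u v
    rw [Walk.adj_toSubgraph_iff_mem_edges, Walk.adj_toSubgraph_iff_mem_edges,
      ← walkFlow_ne_zero w htr, ← walkFlow_ne_zero w htr, hf _ hc]
  have hv : ∀ u, u ∈ w.toSubgraph.verts ↔ ∃ v, w.toSubgraph.Adj u v := by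
    intro u
    constructor
    · intro hu
      rw [Walk.mem_verts_toSubgraph, Walk.mem_support_iff_exists_mem_edges_of_not_nil hnn] at hu
      obtain ⟨e, he, hue⟩ := hu
      obtain ⟨v, rfl⟩ := hue
      exact ⟨v, Walk.adj_toSubgraph_iff_mem_edges.2 he⟩
    · rintro ⟨v, h⟩
      exact w.toSubgraph.edge_vert h
  ext x y
  · simp only [Subgraph.map_verts, Set.mem_image]
    constructor
    · rintro ⟨u, hu, rfl⟩
      obtain ⟨v, h⟩ := (hv u).1 hu
      exact (hv _).2 ⟨f v, (hadj u v).2 h⟩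
    · intro hx
      obtain ⟨y, h⟩ := (hv x).1 hx
      obtain ⟨u, rfl⟩ := f.surjective x
      obtain ⟨v, rfl⟩ := f.surjective y
      exact ⟨u, (hv u).2 ⟨v, (hadj u v).1 h⟩, rfl⟩
  · simp only [Subgraph.map_adj, Relation.Map]
    constructor
    · rintro ⟨u, v, h, rfl, rfl⟩
      exact (hadj u v).2 h
    · intro h
      obtain ⟨u, rfl⟩ := f.surjective x
      obtain ⟨v, rfl⟩ := f.surjective y
      exact ⟨u, v, (hadj u v).1 h, rfl, rfl⟩
end

section
/- Let X be a finite simple connected graph with minimum degree at least 2 that is not a simple cycle, and let T be a spanning tree of X. Then the homomorphism Θ_T : Aut(X) → U_β sending f to the matrix M_T(f) of its action on H_1(X,ℤ) is injective. Equivalently, Aut(X) acts faithfully on H_1(X,ℤ). -/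
open SimpleGraph
variable {V : Type*}

variable {V : Type*}

open Classical in
lemma trace_pi_eq {ι : Type*} [Fintype ι] (L : (ι → ℚ) →ₗ[ℚ] (ι → ℚ)) :
    LinearMap.trace ℚ _ L = ∑ i, L (Pi.single i 1) i := by
  rw [LinearMap.trace_eq_matrix_trace ℚ (Pi.basisFun ℚ ι), Matrix.trace]
  simp [LinearMap.toMatrix_apply]

lemma exists_factor {A B C : Type*} [AddCommGroup A] [Module ℚ A] [AddCommGroup B] [Module ℚ B]
    [AddCommGroup C] [Module ℚ C] (D : A →ₗ[ℚ] B) (g : A →ₗ[ℚ] C)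
    (h : ∀ x, D x = 0 → g x = 0) : ∃ k : B →ₗ[ℚ] C, g = k ∘ₗ D := by
  obtain ⟨r, hr⟩ := D.rangeRestrict.exists_rightInverse_of_surjective D.range_rangeRestrict
  obtain ⟨k, hk⟩ := (g ∘ₗ r).exists_extend
  refine ⟨k, LinearMap.ext fun x => ?_⟩
  have h1 : k (D x) = g (r (D.rangeRestrict x)) := by
    have := LinearMap.congr_fun hk (D.rangeRestrict x)
    simpa using this
  have h2 : D (r (D.rangeRestrict x)) = D x := by
    have := LinearMap.congr_fun hr (D.rangeRestrict x)
    simpa using congrArg Subtype.val this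
  have h3 : g (x - r (D.rangeRestrict x)) = 0 := h _ (by rw [map_sub, h2, sub_self])
  rw [map_sub, sub_eq_zero] at h3
  rw [LinearMap.comp_apply, h1, h3]

/-- The trace identity: `g = k ∘ D`, `D ∘ g = h ∘ D` and `range h ≤ range D` force equal traces. -/
lemma trace_eq_of_factor {ι κ : Type*} [Fintype ι] [Fintype κ]
    (D : (ι → ℚ) →ₗ[ℚ] (κ → ℚ)) (g : (ι → ℚ) →ₗ[ℚ] (ι → ℚ)) (h : (κ → ℚ) →ₗ[ℚ] (κ → ℚ))
    (hg : ∀ x, D x = 0 → g x = 0) (hc : D ∘ₗ g = h ∘ₗ D)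
    (hr : ∀ x, h x ∈ LinearMap.range D) :
    LinearMap.trace ℚ _ g = LinearMap.trace ℚ _ h := by
  obtain ⟨k, hk⟩ := exists_factor D g hg
  have hN : IsNilpotent (D ∘ₗ k - h) := by
    refine ⟨2, LinearMap.ext fun x => ?_⟩
    rw [pow_two, Module.End.mul_apply]
    have hm : (D ∘ₗ k - h) x ∈ LinearMap.range D :=
      Submodule.sub_mem _ ⟨k x, rfl⟩ (hr x)
    obtain ⟨y, hy⟩ := hm
    rw [← hy]
    have h1 := LinearMap.congr_fun hc y
    have h2 := LinearMap.congr_fun hk y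
    simp only [LinearMap.comp_apply] at h1 h2
    simp only [LinearMap.sub_apply, LinearMap.comp_apply, LinearMap.zero_apply]
    rw [← h2, h1, sub_self]
  have h0 := (LinearMap.isNilpotent_trace_of_isNilpotent hN).eq_zero
  rw [map_sub, sub_eq_zero] at h0
  rw [← h0, hk, LinearMap.trace_comp_comm']

open Classical in
/-- Projection onto antisymmetric functions supported on edges. -/
noncomputable def projEdge (G : SimpleGraph V) : (V × V → ℚ) →ₗ[ℚ] (V × V → ℚ) where
  toFun c := fun p => if G.Adj p.1 p.2 then (c p - c p.swap) / 2 else 0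
  map_add' c d := by
    ext p
    simp only [Pi.add_apply]
    split_ifs <;> ring
  map_smul' a c := by
    ext p
    simp only [Pi.smul_apply, smul_eq_mul, RingHom.id_apply]
    split_ifs <;> ring

/-- Divergence. -/
def divMap (V : Type*) [Fintype V] : (V × V → ℚ) →ₗ[ℚ] (V → ℚ) where
  toFun c := fun u => ∑ v, c (u, v)
  map_add' c d := by
    ext p
    simp [Finset.sum_add_distrib]
  map_smul' a c := by
    ext p
    simp [Finset.mul_sum]

lemma fixes_rat [Fintype V] (G : SimpleGraph V) (f : G ≃g G) (hf : FixesH1 ℤ G f)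
    (c : V × V → ℚ) (h1 : ∀ u v, ¬ G.Adj u v → c (u, v) = 0)
    (h2 : ∀ u v, c (u, v) = - c (v, u)) (h3 : ∀ u, ∑ v, c (u, v) = 0) (u v : V) :
    c (f u, f v) = c (u, v) := by
  obtain ⟨⟨b, hb⟩, hb'⟩ := IsLocalization.exist_integer_multiples_of_finite (nonZeroDivisors ℤ) c
  choose d hd using hb'
  have hd' : ∀ p, ((d p : ℤ) : ℚ) = b * c p := by
    intro p
    have := hd p
    simpa using this
  have hb0 : (b : ℚ) ≠ 0 := by
    exact_mod_cast nonZeroDivisors.ne_zero hb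
  have hm : (fun u v => d (u, v)) ∈ cycleSpace ℤ G := by
    refine ⟨fun u v h => ?_, fun u v => ?_, fun u => ?_⟩
    · have := hd' (u, v)
      rw [h1 u v h, mul_zero] at this
      exact_mod_cast this
    · have := hd' (u, v)
      rw [h2 u v, mul_neg, ← hd' (v, u)] at this
      exact_mod_cast this
    · have : ((∑ v, d (u, v) : ℤ) : ℚ) = 0 := by
        push_cast
        simp only [hd']
        rw [← Finset.mul_sum, h3, mul_zero]
      exact_mod_cast this
  have := hf _ hm u v
  have h4 : ((d (f u, f v) : ℤ) : ℚ) = d (u, v) := by exact_mod_cast this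
  rw [hd', hd'] at h4
  exact mul_left_cancel₀ hb0 h4

open Classical in
lemma range_single [Fintype V] (G : SimpleGraph V) {a b : V} (h : G.Reachable a b) :
    (Pi.single a 1 - Pi.single b 1 : V → ℚ) ∈ LinearMap.range (divMap V ∘ₗ projEdge G) := by
  obtain ⟨w⟩ := h
  induction w with
  | nil => rw [sub_self]; exact Submodule.zero_mem _
  | @cons a b c hab w ih =>
    have : (Pi.single a 1 - Pi.single b 1 : V → ℚ) ∈
        LinearMap.range (divMap V ∘ₗ projEdge G) := by
      refine ⟨(2 : ℚ) • Pi.single (a, b) 1, ?_⟩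
      ext x
      have key : ∀ y, (if G.Adj x y then
          ((2 : ℚ) * (Pi.single (a, b) 1 : V × V → ℚ) (x, y)
            - 2 * (Pi.single (a, b) 1 : V × V → ℚ) (y, x)) / 2 else 0)
          = (if y = b then (if x = a then 1 else 0) else 0)
            - (if y = a then (if x = b then 1 else 0) else 0) := by
        intro y
        have hne := hab.ne
        have hba := hab.symm
        simp only [Pi.single_apply, Prod.mk.injEq]
        by_cases hx : x = a <;> by_cases hy : y = b <;> by_cases hx' : x = b <;>
          by_cases hy' : y = a <;> simp_all
      simp only [divMap, projEdge, LinearMap.comp_apply, LinearMap.coe_mk, AddHom.coe_mk,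
        Pi.smul_apply, smul_eq_mul, Prod.swap_prod_mk, Pi.sub_apply]
      rw [Finset.sum_congr rfl (fun y _ => key y)]
      simp [Finset.sum_sub_distrib, Pi.single_apply]
    have h2 := Submodule.add_mem _ this ih
    rwa [sub_add_sub_cancel] at h2

open Classical in
lemma trace_identity [Fintype V] (G : SimpleGraph V) (hG : G.Connected) (f : G ≃g G)
    (hf : FixesH1 ℤ G f) :
    ∑ p : V × V, (if G.Adj p.1 p.2 then
      ((if f p.1 = p.1 ∧ f p.2 = p.2 then (1 : ℚ) else 0)
        - (if f p.1 = p.2 ∧ f p.2 = p.1 then 1 else 0) - 1) / 2 else 0)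
    = ∑ v : V, ((if f v = v then (1 : ℚ) else 0) - 1) := by
  have hadj : ∀ u v, G.Adj (f u) (f v) ↔ G.Adj u v := fun u v => f.map_rel_iff
  let F : (V × V → ℚ) →ₗ[ℚ] (V × V → ℚ) := LinearMap.funLeft ℚ ℚ (Prod.map f f)
  let F0 : (V → ℚ) →ₗ[ℚ] (V → ℚ) := LinearMap.funLeft ℚ ℚ f
  have hF : ∀ c u v, F c (u, v) = c (f u, f v) := fun c u v => rfl
  have hF0 : ∀ c u, F0 c u = c (f u) := fun c u => rfl
  have hP : ∀ c u v, projEdge G c (u, v) = if G.Adj u v then (c (u, v) - c (v, u)) / 2 else 0 :=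
    fun c u v => rfl
  have hD : ∀ c u, divMap V c u = ∑ v, c (u, v) := fun c u => rfl
  have main := trace_eq_of_factor (divMap V ∘ₗ projEdge G) (F ∘ₗ projEdge G - projEdge G)
    (F0 - LinearMap.id) ?_ ?_ ?_
  · rw [trace_pi_eq, trace_pi_eq] at main
    convert main using 1
    · refine Finset.sum_congr rfl ?_
      rintro ⟨u, v⟩ -
      simp only [LinearMap.sub_apply, LinearMap.comp_apply, Pi.sub_apply, hF, hP, hadj]
      by_cases h : G.Adj u v
      · have hne := h.ne
        have hne' := h.ne'
        simp only [h, if_true, Pi.single_apply, Prod.mk.injEq, hne, hne', and_self, if_false]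
        simp only [and_comm (a := f v = u)]
        ring
      · simp [h]
    · refine Finset.sum_congr rfl fun v _ => ?_
      simp [hF0, Pi.single_apply]
  · intro c hc
    ext ⟨u, v⟩
    have := fixes_rat G f hf (projEdge G c) (fun u v h => by simp [hP, h])
      (fun u v => by
        rw [hP, hP]
        simp only [G.adj_comm v u]
        split_ifs <;> ring)
      (fun u => congrFun hc u) u v
    simp only [LinearMap.sub_apply, LinearMap.comp_apply, Pi.sub_apply, hF, this, sub_self,
      Pi.zero_apply]
  · refine LinearMap.ext fun c => funext fun u => ?_
    have hPP : ∀ c, projEdge G (projEdge G c) = projEdge G c := by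
      intro c
      ext ⟨u, v⟩
      simp only [hP, G.adj_comm v u]
      split_ifs <;> ring
    have hPF : ∀ c, projEdge G (F c) = F (projEdge G c) := by
      intro c
      ext ⟨u, v⟩
      simp only [hP, hF, hadj]
    have hDF : ∀ c, divMap V (F c) = F0 (divMap V c) := by
      intro c
      ext u
      simp only [hD, hF, hF0]
      exact Equiv.sum_comp f.toEquiv (fun w => c (f u, w))
    simp only [LinearMap.sub_apply, LinearMap.comp_apply, map_sub, hPF, hPP, hDF,
      LinearMap.id_apply]
  · intro x
    have h0 : (LinearMap.range (divMap V ∘ₗ projEdge G)).mkQ ∘ₗ (F0 - LinearMap.id) = 0 := by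
      refine LinearMap.pi_ext' fun i => LinearMap.ext_ring ?_
      simp only [LinearMap.comp_apply, LinearMap.zero_apply, Submodule.mkQ_apply,
        Submodule.Quotient.mk_eq_zero, LinearMap.sub_apply, LinearMap.id_apply,
        LinearMap.single_apply]
      have := range_single G (hG.preconnected (f.symm i) i)
      convert this using 2
      ext u
      simp only [hF0, Pi.single_apply]
      congr 1
      rw [eq_iff_iff]
      exact f.toEquiv.eq_symm_apply.symm
    have := LinearMap.congr_fun h0 x
    exact (Submodule.Quotient.mk_eq_zero _).1 this

theorem aut_faithful_on_H1 [Fintype V]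
    (G : SimpleGraph V) (hG : G.Connected)
    (hmin : ∀ v : V, 2 ≤ (G.neighborSet v).ncard)
    (hnotcyc : ¬ ∀ v : V, (G.neighborSet v).ncard = 2)
    (T : SimpleGraph V) (hTG : T ≤ G) (hT : T.IsTree) :
    ∀ f : G ≃g G, FixesH1 ℤ G f → ∀ v : V, f v = v := by
  classical
  intro f hf
  have id1 := trace_identity G hG f hf
  -- M v = 1 iff v is moved
  have hdeg : ∀ u, (∑ v, if G.Adj u v then (1 : ℚ) else 0) = (G.neighborSet u).ncard := by
    intro u
    rw [Finset.sum_boole, Set.ncard_eq_toFinset_card']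
    congr 2
    ext v
    simp
  let m : V → ℚ := fun v => if f v = v then 0 else 1
  have hm0 : ∀ v, f v = v → m v = 0 := fun v h => by simp [m, h]
  have hm1 : ∀ v, f v ≠ v → m v = 1 := fun v h => by simp [m, h]
  have hle : ∑ u, ∑ v, (if G.Adj u v then (m u + (1 - m u) * m v) else 0) ≤ 2 * ∑ v, m v := by
    have e1 : ∑ v, m v = - ∑ v : V, ((if f v = v then (1 : ℚ) else 0) - 1) := by
      rw [← Finset.sum_neg_distrib]
      refine Finset.sum_congr rfl fun v _ => ?_
      by_cases h : f v = v <;> simp [m, h]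
    rw [e1, ← id1, Fintype.sum_prod_type, ← Finset.sum_neg_distrib, Finset.mul_sum]
    refine Finset.sum_le_sum fun u _ => ?_
    rw [← Finset.sum_neg_distrib, Finset.mul_sum]
    refine Finset.sum_le_sum fun v _ => ?_
    by_cases h : G.Adj u v
    · simp only [h, if_true]
      by_cases hu : f u = u <;> by_cases hv : f v = v
      · have : ¬ (u = v ∧ v = u) := fun h' => h.ne h'.1
        simp [m, hu, hv, this]
      all_goals
        simp only [m, hu, hv, if_true, if_false, and_self, and_false, false_and]
        split_ifs <;> norm_num
    · simp [h]
  have hsplit : ∑ u, ∑ v, (if G.Adj u v then (m u + (1 - m u) * m v) else 0)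
      = ∑ u, m u * (G.neighborSet u).ncard
        + ∑ u, ∑ v, (if G.Adj u v then ((1 - m u) * m v) else 0) := by
    rw [← Finset.sum_add_distrib]
    refine Finset.sum_congr rfl fun u _ => ?_
    rw [← hdeg, Finset.mul_sum, ← Finset.sum_add_distrib]
    refine Finset.sum_congr rfl fun v _ => ?_
    split_ifs <;> ring
  have hmn : ∀ v, 0 ≤ m v := fun v => by simp only [m]; split_ifs <;> norm_num
  have hml : ∀ v, 0 ≤ 1 - m v := fun v => by simp only [m]; split_ifs <;> norm_num
  have hA : ∀ u ∈ Finset.univ, 0 ≤ m u * ((G.neighborSet u).ncard - 2 : ℚ) := fun u _ =>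
    mul_nonneg (hmn u) (by have : (2 : ℚ) ≤ (G.neighborSet u).ncard := by exact_mod_cast hmin u
                           linarith)
  have hB1 : ∀ u, ∀ v ∈ Finset.univ,
      0 ≤ (if G.Adj u v then ((1 - m u) * m v) else 0) := fun u v _ => by
    split_ifs
    · exact mul_nonneg (hml u) (hmn v)
    · exact le_rfl
  have hB : ∀ u ∈ Finset.univ, 0 ≤ ∑ v, (if G.Adj u v then ((1 - m u) * m v) else 0) :=
    fun u _ => Finset.sum_nonneg (hB1 u)
  have hAe : ∑ u, m u * ((G.neighborSet u).ncard - 2 : ℚ)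
      = ∑ u, m u * (G.neighborSet u).ncard - 2 * ∑ v, m v := by
    rw [Finset.mul_sum, ← Finset.sum_sub_distrib]
    exact Finset.sum_congr rfl fun u _ => by ring
  have sA := Finset.sum_nonneg hA
  have sB := Finset.sum_nonneg hB
  have zA := (Finset.sum_eq_zero_iff_of_nonneg hA).1 (by linarith)
  have zB := (Finset.sum_eq_zero_iff_of_nonneg hB).1 (by linarith)
  by_contra hcon
  push Not at hcon
  obtain ⟨w, hw⟩ := hcon
  have step : ∀ u v, G.Adj u v → f u ≠ u → f v ≠ v := by
    intro u v h hu hv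
    have := (Finset.sum_eq_zero_iff_of_nonneg (hB1 v)).1 (zB v (Finset.mem_univ _)) u
      (Finset.mem_univ _)
    rw [if_pos h.symm, hm0 v hv, hm1 u hu] at this
    norm_num at this
  have all : ∀ v, f v ≠ v := by
    intro v
    obtain ⟨p⟩ := hG.preconnected w v
    induction p with
    | nil => exact hw
    | cons h p ih => exact ih (step _ _ h hw)
  apply hnotcyc
  intro v
  have := zA v (Finset.mem_univ _)
  rw [hm1 v (all v), one_mul, sub_eq_zero] at this
  exact_mod_cast this
end

section
/- Let X be a finite simple connected 2-edge-connected graph that is not a simple cycle. Then every nonidentity automorphism of X acts nontrivially on H_1(X,ℤ). -/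
open SimpleGraph
variable {V : Type*}

variable {V : Type*}

theorem aux_closed {V : Type*} (H : SimpleGraph V) (T : Set V)
    (hT : ∀ u v, H.Adj u v → u ∈ T → v ∈ T) {x y : V} (h : H.Reachable x y) (hx : x ∈ T) :
    y ∈ T := by
  obtain ⟨p⟩ := h
  induction p with
  | nil => exact hx
  | cons hadj p ih => exact ih (hT _ _ hadj hx)

open Classical in
theorem aux_flow {V : Type*} [Fintype V] (H : SimpleGraph V) {x y : V} (h : H.Reachable x y) :
    ∃ c : V → V → ℤ, (∀ u v, ¬ H.Adj u v → c u v = 0) ∧ (∀ u v, c u v = - c v u) ∧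
      ∀ u, ∑ v, c u v = (if u = x then 1 else 0) - (if u = y then 1 else 0) := by
  obtain ⟨p⟩ := h
  induction p with
  | nil => exact ⟨fun _ _ => 0, by simp, by simp, by simp⟩
  | @cons x z y hadj p ih =>
    obtain ⟨c, h1, h2, h3⟩ := ih
    refine ⟨fun u v => c u v + ((if u = x then 1 else 0) * (if v = z then 1 else 0)
      - (if u = z then 1 else 0) * (if v = x then 1 else 0)), ?_, ?_, ?_⟩
    · intro u v huv
      have hvu := fun h : _ => huv (SimpleGraph.Adj.symm h)
      have e1 : ¬ (u = x ∧ v = z) := by rintro ⟨rfl, rfl⟩; exact huv hadj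
      have e2 : ¬ (u = z ∧ v = x) := by rintro ⟨rfl, rfl⟩; exact hvu hadj
      simp only [h1 u v huv]
      split_ifs <;> first | rfl | (exfalso; tauto)
    · intro u v
      simp only []
      rw [h2 u v]; ring
    · intro u
      rw [Finset.sum_add_distrib, h3, Finset.sum_sub_distrib, ← Finset.mul_sum, ← Finset.mul_sum]
      simp

/-- Closing a path avoiding the edge `wa` by that edge. -/
theorem aux_cycle {V : Type*} [Fintype V] (G H : SimpleGraph V) (hH : H ≤ G) {w a : V}
    (ha : G.Adj w a) (hn : ¬ H.Adj w a) (h : H.Reachable w a) :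
    ∃ c ∈ cycleSpace ℤ G, c w a = 1 ∧
      ∀ u v, ¬ H.Adj u v → s(u, v) ≠ s(w, a) → c u v = 0 := by
  classical
  obtain ⟨c, h1, h2, h3⟩ := aux_flow H h.symm
  have hne := ha.ne
  refine ⟨fun u v => c u v + ((if u = w then 1 else 0) * (if v = a then 1 else 0)
      - (if u = a then 1 else 0) * (if v = w then 1 else 0)), ⟨?_, ?_, ?_⟩, ?_, ?_⟩
  · intro u v huv
    have hvu := fun h : _ => huv (SimpleGraph.Adj.symm h)
    have e1 : ¬ (u = w ∧ v = a) := by rintro ⟨rfl, rfl⟩; exact huv ha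
    have e2 : ¬ (u = a ∧ v = w) := by rintro ⟨rfl, rfl⟩; exact hvu ha
    simp only [h1 u v (fun h => huv (hH h))]
    split_ifs <;> first | rfl | (exfalso; tauto)
  · intro u v
    simp only []
    rw [h2 u v]; ring
  · intro u
    rw [Finset.sum_add_distrib, h3, Finset.sum_sub_distrib, ← Finset.mul_sum, ← Finset.mul_sum]
    simp
  · simp [h1 w a hn, hne]
  · intro u v huv hs
    have e1 : ¬ (u = w ∧ v = a) := by rintro ⟨rfl, rfl⟩; exact hs rfl
    have e2 : ¬ (u = a ∧ v = w) := by rintro ⟨rfl, rfl⟩; exact hs Sym2.eq_swap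
    simp only [h1 u v huv]
    split_ifs <;> first | rfl | (exfalso; tauto)

theorem aux_cut_sum {V : Type*} [Fintype V] (G : SimpleGraph V) (c : V → V → ℤ)
    (hc : c ∈ cycleSpace ℤ G) (φ : V → ℤ) : ∑ u, ∑ v, (φ u - φ v) * c u v = 0 := by
  obtain ⟨_, h2, h3⟩ := hc
  have e1 : ∑ u, ∑ v, φ u * c u v = 0 := by
    simp [← Finset.mul_sum, h3]
  have e2 : ∑ u, ∑ v, φ v * c u v = 0 := by
    rw [Finset.sum_comm]
    have : ∀ v, ∑ u, φ v * c u v = 0 := by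
      intro v
      rw [← Finset.mul_sum]
      have : ∑ u, c u v = - ∑ u, c v u := by
        rw [← Finset.sum_neg_distrib]; exact Finset.sum_congr rfl fun u _ => h2 u v
      rw [this, h3]; simp
    simp [this]
  simp only [sub_mul, Finset.sum_sub_distrib, e1, e2, sub_zero]

theorem aux_nb {V : Type*} (G : SimpleGraph V)
    (hbridgeless : ∀ e ∈ G.edgeSet, ¬ G.IsBridge e) {w a : V} (ha : G.Adj w a) :
    (G.deleteEdges {s(w, a)}).Reachable w a := by
  have := hbridgeless s(w, a) ha
  rw [SimpleGraph.isBridge_iff] at this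
  simpa using this

/-- A one-edge cut contradicts bridgelessness. -/
theorem aux_one {V : Type*} (G : SimpleGraph V)
    (hbridgeless : ∀ e ∈ G.edgeSet, ¬ G.IsBridge e) {w a : V} (ha : G.Adj w a) (T : Set V)
    (hw : w ∈ T) (haT : a ∉ T)
    (h : ∀ u v, G.Adj u v → u ∈ T → v ∉ T → s(u, v) = s(w, a)) : False := by
  refine haT (aux_closed _ T ?_ (aux_nb G hbridgeless ha) hw)
  intro u v huv hu
  by_contra hv
  rw [SimpleGraph.deleteEdges_adj] at huv
  exact huv.2 (h u v huv.1 hu hv)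

theorem aux_cut {V : Type*} [Fintype V] (G : SimpleGraph V)
    (hbridgeless : ∀ e ∈ G.edgeSet, ¬ G.IsBridge e) (f : G ≃g G) (hf : FixesH1 ℤ G f)
    {w a : V} (ha : G.Adj w a) (hne : s(f w, f a) ≠ s(w, a)) :
    ∃ S : Set V, w ∈ S ∧ a ∉ S ∧ f w ∉ S ∧ f a ∈ S ∧
      ∀ u v, G.Adj u v → u ∈ S → v ∉ S → (u = w ∧ v = a) ∨ (u = f a ∧ v = f w) := by
  classical
  set H := G.deleteEdges {s(w, a), s(f w, f a)} with hHdef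
  have hHG : H ≤ G := SimpleGraph.deleteEdges_le _
  let S : Set V := {v | H.Reachable w v}
  have hwS : w ∈ S := SimpleGraph.Reachable.refl w
  have hn1 : ¬ H.Adj w a := by simp [hHdef]
  have hn2 : ¬ H.Adj (f w) (f a) := by simp [hHdef]
  have haS : a ∉ S := by
    intro h
    obtain ⟨c, hc, h1, h2⟩ := aux_cycle G H hHG ha hn1 h
    have := hf c hc w a
    rw [h1, h2 _ _ hn2 hne] at this
    exact absurd this (by norm_num)
  have hcut : ∀ u v, G.Adj u v → u ∈ S → v ∉ S → s(u, v) = s(w, a) ∨ s(u, v) = s(f w, f a) := by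
    intro u v huv hu hv
    by_contra hcon
    apply hv
    have hadj : H.Adj u v := by
      rw [hHdef, SimpleGraph.deleteEdges_adj]
      exact ⟨huv, by simpa using hcon⟩
    exact SimpleGraph.Reachable.trans (show H.Reachable w u from hu) hadj.reachable
  have hmain : f w ∉ S ∧ f a ∈ S := by
    by_contra hcon
    by_cases hcase : f w ∈ S ∧ f a ∉ S
    · obtain ⟨c, hc, h1, -⟩ := aux_cycle G _ (SimpleGraph.deleteEdges_le {s(w, a)}) ha (by simp)
        (aux_nb G hbridgeless ha)
      have h1' := hf c hc w a
      rw [h1] at h1'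
      have hs := aux_cut_sum G c hc (fun u => if u ∈ S then 1 else 0)
      have hanti := hc.2.1
      have hsupp := hc.1
      have hpos : ∀ u v, u ∈ S → v ∉ S → 0 ≤ c u v := by
        intro u v hu hv
        by_cases huv : G.Adj u v
        · rcases hcut u v huv hu hv with h | h
          · rcases Sym2.eq_iff.1 h with ⟨rfl, rfl⟩ | ⟨rfl, rfl⟩
            · omega
            · exact absurd hu haS
          · rcases Sym2.eq_iff.1 h with ⟨rfl, rfl⟩ | ⟨rfl, rfl⟩
            · omega
            · exact absurd hu hcase.2
        · rw [hsupp u v huv]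
      have hnn : ∀ u v, 0 ≤ ((if u ∈ S then 1 else 0) - (if v ∈ S then 1 else 0) : ℤ) * c u v := by
        intro u v
        by_cases hu : u ∈ S <;> by_cases hv : v ∈ S
        · simp [hu, hv]
        · simpa [hu, hv] using hpos u v hu hv
        · have := hpos v u hv hu
          rw [hanti] at this
          simpa [hu, hv] using this
        · simp [hu, hv]
      rw [Finset.sum_eq_zero_iff_of_nonneg (fun u _ => Finset.sum_nonneg fun v _ => hnn u v)] at hs
      have hs2 := hs w (Finset.mem_univ _)
      rw [Finset.sum_eq_zero_iff_of_nonneg (fun v _ => hnn w v)] at hs2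
      have hs3 := hs2 a (Finset.mem_univ _)
      simp [hwS, haS, h1] at hs3
    · refine aux_one G hbridgeless ha S hwS haS ?_
      intro u v huv hu hv
      rcases hcut u v huv hu hv with h | h
      · exact h
      · exfalso
        rcases Sym2.eq_iff.1 h with ⟨rfl, rfl⟩ | ⟨rfl, rfl⟩
        · exact hcase ⟨hu, hv⟩
        · exact hcon ⟨hv, hu⟩
  refine ⟨S, hwS, haS, hmain.1, hmain.2, ?_⟩
  intro u v huv hu hv
  rcases hcut u v huv hu hv with h | h
  · rcases Sym2.eq_iff.1 h with h | ⟨rfl, rfl⟩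
    · exact Or.inl h
    · exact absurd hu haS
  · rcases Sym2.eq_iff.1 h with ⟨rfl, rfl⟩ | h
    · exact absurd hu hmain.1
    · exact Or.inr h

theorem nonidentity_aut_acts_nontrivially_on_H1 [Fintype V]
    (G : SimpleGraph V) (hG : G.Connected)
    (hbridgeless : ∀ e ∈ G.edgeSet, ¬ G.IsBridge e)
    (hnotcyc : ¬ ∀ v : V, (G.neighborSet v).ncard = 2) :
    ∀ f : G ≃g G, (∃ v : V, f v ≠ v) → ¬ FixesH1 ℤ G f := by
  classical
  rintro f ⟨v0, hv0⟩ hf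
  -- edges are never reversed
  have hrev : ∀ w a, G.Adj w a → f w = a → f a = w → False := by
    intro w a ha h1 h2
    obtain ⟨c, hc, hc1, -⟩ := aux_cycle G _ (SimpleGraph.deleteEdges_le {s(w, a)}) ha (by simp)
      (aux_nb G hbridgeless ha)
    have e := hf c hc w a
    rw [h1, h2, hc.2.1, hc1] at e
    exact absurd e (by norm_num)
  -- no fixed vertices
  have hnofix : ∀ w, f w ≠ w := by
    intro w hw
    apply hv0
    refine aux_closed G {v | f v = v} ?_ (hG.preconnected w v0) hw
    intro u v huv (hu : f u = u)
    by_contra hv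
    have hv : f v ≠ v := hv
    have hne : s(f u, f v) ≠ s(u, v) := by
      intro h
      rcases Sym2.eq_iff.1 h with ⟨_, h⟩ | ⟨h, _⟩
      · exact hv h
      · exact huv.ne (hu.symm.trans h)
    obtain ⟨S, h1, -, h2, -⟩ := aux_cut G hbridgeless f hf huv hne
    exact h2 (hu.symm ▸ h1)
  have hcut : ∀ w a, G.Adj w a → ∃ S : Set V, w ∈ S ∧ a ∉ S ∧ f w ∉ S ∧ f a ∈ S ∧
      ∀ u v, G.Adj u v → u ∈ S → v ∉ S → (u = w ∧ v = a) ∨ (u = f a ∧ v = f w) := by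
    intro w a ha
    refine aux_cut G hbridgeless f hf ha ?_
    intro h
    rcases Sym2.eq_iff.1 h with ⟨h, _⟩ | ⟨h1, h2⟩
    · exact hnofix w h
    · exact hrev w a ha h1 h2
  push Not at hnotcyc
  obtain ⟨w, hw⟩ := hnotcyc
  -- three neighbours
  obtain ⟨a, ha⟩ : ∃ a, G.Adj w a := by
    by_contra hcon
    push Not at hcon
    have := aux_closed G {w} (by rintro u v huv rfl; exact absurd huv (hcon v))
      (hG.preconnected w (f w)) rfl
    exact hnofix w this
  obtain ⟨b, hb, hab⟩ : ∃ b, G.Adj w b ∧ a ≠ b := by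
    by_contra hcon
    push Not at hcon
    refine aux_one G hbridgeless ha {w} rfl (fun h => ha.ne h.symm) ?_
    rintro u v huv rfl -
    rw [hcon v huv]
  obtain ⟨c, hc, hac, hbc⟩ : ∃ c, G.Adj w c ∧ a ≠ c ∧ b ≠ c := by
    by_contra hcon
    push Not at hcon
    apply hw
    have : G.neighborSet w = {a, b} := by
      ext x
      simp only [SimpleGraph.mem_neighborSet, Set.mem_insert_iff, Set.mem_singleton_iff]
      constructor
      · intro hx
        by_cases h : a = x
        · exact Or.inl h.symm
        · exact Or.inr (hcon x hx h).symm
      · rintro (rfl | rfl) <;> assumption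
    rw [this, Set.ncard_pair hab]
  -- `w` is not adjacent to its image
  have hnadj : ¬ G.Adj w (f w) := by
    intro hadj
    have key : ∀ x, G.Adj w x → x = f w ∨ f x = w := by
      intro x hx
      obtain ⟨S, h1, -, h3, -, h5⟩ := hcut w x hx
      rcases h5 w (f w) hadj h1 h3 with h | h
      · exact Or.inl h.2.symm
      · exact Or.inr h.1.symm
    have inj : ∀ x y, f x = w → f y = w → x = y := fun x y hx hy =>
      f.injective (hx.trans hy.symm)
    rcases key a ha with h1 | h1 <;> rcases key b hb with h2 | h2 <;>
      rcases key c hc with h3 | h3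
    all_goals first
      | exact hab (h1.trans h2.symm)
      | exact hac (h1.trans h3.symm)
      | exact hbc (h2.trans h3.symm)
      | exact hab (inj _ _ h1 h2)
      | exact hac (inj _ _ h1 h3)
      | exact hbc (inj _ _ h2 h3)
  obtain ⟨A, A1, A2, A3, A4, A5⟩ := hcut w a ha
  obtain ⟨B, B1, B2, B3, B4, B5⟩ := hcut w b hb
  obtain ⟨C, C1, C2, C3, C4, C5⟩ := hcut w c hc
  have in_cut : ∀ (S : Set V) (x y : V), w ∈ S → G.Adj w y → x ≠ y →
      (∀ u v, G.Adj u v → u ∈ S → v ∉ S → (u = w ∧ v = x) ∨ (u = f x ∧ v = f w)) → y ∈ S := by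
    intro S x y hS hy hxy h
    by_contra hyS
    rcases h w y hy hS hyS with h | h
    · exact hxy h.2.symm
    · exact hnadj (h.2 ▸ hy)
  have out_cut : ∀ (S : Set V) (x y : V), f w ∉ S → G.Adj w y → x ≠ y →
      (∀ u v, G.Adj u v → u ∈ S → v ∉ S → (u = w ∧ v = x) ∨ (u = f x ∧ v = f w)) → f y ∉ S := by
    intro S x y hS hy hxy h hyS
    have hadj : G.Adj (f y) (f w) := f.map_adj_iff.2 hy.symm
    rcases h _ _ hadj hyS hS with h | h
    · exact hnadj (h.1 ▸ hadj)
    · exact hxy (f.injective h.1).symm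
  have cA := in_cut A a c A1 hc hac A5
  have cB := in_cut B b c B1 hc hbc B5
  have bC := in_cut C c b C1 hb hbc.symm C5
  have aC := in_cut C c a C1 ha hac.symm C5
  have faB := out_cut B b a B3 ha hab.symm B5
  have fbA := out_cut A a b A3 hb hab A5
  have fcA := out_cut A a c A3 hc hac A5
  -- the only edge leaving `(A ∩ B) \ C` is `cw`
  refine aux_one G hbridgeless hc.symm ((A ∩ B) \ C) ⟨⟨cA, cB⟩, C2⟩ (fun h => h.2 C1) ?_
  rintro u v huv ⟨⟨uA, uB⟩, uC⟩ hv
  by_cases vA : v ∈ A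
  · by_cases vB : v ∈ B
    · have vC : v ∈ C := by
        by_contra vC
        exact hv ⟨⟨vA, vB⟩, vC⟩
      rcases C5 v u huv.symm vC uC with ⟨rfl, rfl⟩ | ⟨rfl, rfl⟩
      · rfl
      · exact absurd uA A3
    · rcases B5 u v huv uB vB with ⟨rfl, rfl⟩ | ⟨rfl, rfl⟩
      · exact absurd C1 uC
      · exact absurd uA fbA
  · rcases A5 u v huv uA vA with ⟨rfl, rfl⟩ | ⟨rfl, rfl⟩
    · exact absurd C1 uC
    · exact absurd uB faB
end

section
/- Let X be a finite simple connected graph with minimum degree at least 2 that is not a simple cycle, and let p > 2 be a prime. Then Aut(X) acts faithfully on H_1(X, ℤ_p). -/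
open SimpleGraph
variable {V : Type*}

variable {V : Type*}

section Helpers

open SimpleGraph.Walk

/-- The ordered pair `(x, y)` is traversed by the walk. -/
def InD {W : Type*} {G : SimpleGraph W} {u v : W} (p : G.Walk u v) (x y : W) : Prop :=
  (x, y) ∈ p.darts.map (fun d => d.toProd)

theorem inD_cons {W : Type*} {G : SimpleGraph W} {u v w : W} (h : G.Adj u v) (p : G.Walk v w)
    (x y : W) : InD (Walk.cons h p) x y ↔ (x = u ∧ y = v) ∨ InD p x y := by
  simp [InD]

theorem inD_append {W : Type*} {G : SimpleGraph W} {u v w : W} (p : G.Walk u v) (q : G.Walk v w)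
    (x y : W) : InD (p.append q) x y ↔ InD p x y ∨ InD q x y := by
  simp only [InD, Walk.darts_append, List.map_append, List.mem_append]

theorem InD.mem_edges {W : Type*} {G : SimpleGraph W} {u v : W} {p : G.Walk u v} {x y : W}
    (h : InD p x y) : s(x, y) ∈ p.edges := by
  unfold InD at h
  rw [List.mem_map] at h
  obtain ⟨d, hd, he⟩ := h
  rw [Walk.edges, List.mem_map]
  refine ⟨d, hd, ?_⟩
  rw [SimpleGraph.Dart.edge, he]

theorem mem_edges_inD {W : Type*} {G : SimpleGraph W} {u v : W} {p : G.Walk u v} {x y : W}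
    (h : s(x, y) ∈ p.edges) : InD p x y ∨ InD p y x := by
  induction p with
  | nil => simp at h
  | cons ha p ih =>
    simp only [inD_cons]
    rw [Walk.edges_cons, List.mem_cons] at h
    rcases h with h | h
    · rw [Sym2.eq_iff] at h; tauto
    · have := ih h; tauto

theorem not_inD_end {W : Type*} {G : SimpleGraph W} {u v : W} {p : G.Walk u v} (hp : p.IsPath)
    (y : W) : ¬ InD p v y := by
  induction p with
  | nil => simp [InD]
  | cons ha p ih =>
    rw [Walk.cons_isPath_iff] at hp
    rw [inD_cons]
    rintro (⟨rfl, rfl⟩ | h)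
    · exact hp.2 p.end_mem_support
    · exact ih hp.1 h

open Classical in
/-- The signed flow of a walk. -/
noncomputable def wflow (R : Type*) [CommRing R] {W : Type*} {G : SimpleGraph W} :
    {u v : W} → G.Walk u v → W → W → R
  | _, _, Walk.nil => fun _ _ => 0
  | u, _, Walk.cons (v := v) _ p => fun x y =>
      (if x = u ∧ y = v then 1 else 0) - (if y = u ∧ x = v then 1 else 0) + wflow R p x y

open Classical in
theorem wflow_trail (R : Type*) [CommRing R] {W : Type*} {G : SimpleGraph W} {u v : W}
    (p : G.Walk u v) (hp : p.IsTrail) (x y : W) :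
    wflow R p x y = if InD p x y then 1 else if InD p y x then -1 else 0 := by
  induction p with
  | nil => simp [wflow, InD]
  | @cons a b c ha p ih =>
    rw [Walk.isTrail_cons] at hp
    have ih := ih hp.1
    simp only [wflow, inD_cons, ih]
    by_cases h1 : x = a ∧ y = b
    · obtain ⟨rfl, rfl⟩ := h1
      have e1 : ¬ InD p x y := fun h => hp.2 h.mem_edges
      have e2 : ¬ InD p y x := fun h => hp.2 (by rw [Sym2.eq_swap]; exact h.mem_edges)
      have := ha.ne
      simp [e1, e2, this.symm]
    · by_cases h2 : y = a ∧ x = b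
      · obtain ⟨rfl, rfl⟩ := h2
        have e1 : ¬ InD p y x := fun h => hp.2 h.mem_edges
        have e2 : ¬ InD p x y := fun h => hp.2 (by rw [Sym2.eq_swap]; exact h.mem_edges)
        have := ha.ne
        simp [e1, e2, this.symm]
      · simp [h1, h2]

open Classical in
theorem wflow_sum (R : Type*) [CommRing R] {W : Type*} [Fintype W] {G : SimpleGraph W} {u v : W}
    (p : G.Walk u v) (x : W) :
    ∑ y, wflow R p x y = (if x = u then 1 else 0) - (if x = v then 1 else 0) := by
  induction p with
  | nil => simp [wflow]
  | @cons a b c ha p ih =>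
    simp only [wflow, Finset.sum_add_distrib, Finset.sum_sub_distrib, ih]
    have e1 : ∑ y, (if x = a ∧ y = b then (1 : R) else 0) = if x = a then 1 else 0 := by
      by_cases h : x = a <;> simp [h]
    have e2 : ∑ y, (if y = a ∧ x = b then (1 : R) else 0) = if x = b then 1 else 0 := by
      by_cases h : x = b <;> simp [h]
    rw [e1, e2]; ring

theorem wflow_antisymm (R : Type*) [CommRing R] {W : Type*} {G : SimpleGraph W} {u v : W}
    (p : G.Walk u v) (x y : W) : wflow R p x y = - wflow R p y x := by
  induction p with
  | nil => simp [wflow]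
  | cons ha p ih => simp only [wflow]; rw [ih]; ring

theorem wflow_supp (R : Type*) [CommRing R] {W : Type*} {G : SimpleGraph W} {u v : W}
    (p : G.Walk u v) (x y : W) (h : ¬ G.Adj x y) : wflow R p x y = 0 := by
  induction p with
  | nil => simp [wflow]
  | @cons a b c ha p ih =>
    have h1 : ¬ (x = a ∧ y = b) := by rintro ⟨rfl, rfl⟩; exact h ha
    have h2 : ¬ (y = a ∧ x = b) := by rintro ⟨rfl, rfl⟩; exact h ha.symm
    simp [wflow, ih, h1, h2]

theorem wflow_mem (R : Type*) [CommRing R] {W : Type*} [Fintype W] {G : SimpleGraph W} {u : W}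
    (p : G.Walk u u) : wflow R p ∈ cycleSpace R G :=
  ⟨fun x y h => wflow_supp R p x y h, fun x y => wflow_antisymm R p x y, fun x => by
    rw [wflow_sum]; simp⟩

/-- Every closed trail is mapped into itself, with orientation. -/
def CycInv {W : Type*} (G : SimpleGraph W) (f : G ≃g G) : Prop :=
  ∀ (u : W) (C : G.Walk u u), C.IsCycle → ∀ x y, InD C x y → InD C (f x) (f y)

theorem cycInv_of_fixes {W : Type*} [Fintype W] {G : SimpleGraph W} (p : ℕ) (hp : p.Prime)
    (hp2 : 2 < p) (f : G ≃g G) (hf : FixesH1 (ZMod p) G f) : CycInv G f := by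
  classical
  intro u C hC x y hxy
  haveI : Fact p.Prime := ⟨hp⟩
  haveI : Fact (2 < p) := ⟨hp2⟩
  have h := hf _ (wflow_mem (ZMod p) C) x y
  rw [wflow_trail _ C hC.isTrail, wflow_trail _ C hC.isTrail, if_pos hxy] at h
  by_contra hcon
  rw [if_neg hcon] at h
  split_ifs at h
  · exact ZMod.neg_one_ne_one h
  · exact zero_ne_one h

theorem CycInv.supp {W : Type*} {G : SimpleGraph W} {f : G ≃g G} (hf : CycInv G f) {u : W}
    {C : G.Walk u u} (hC : C.IsCycle) {z : W} (hz : z ∈ C.support) : f z ∈ C.support := by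
  rw [Walk.mem_support_iff_exists_mem_edges_of_not_nil hC.not_nil] at hz
  obtain ⟨e, he, hze⟩ := hz
  obtain ⟨y, rfl⟩ := Sym2.mem_iff_exists.mp hze
  rcases mem_edges_inD he with h | h
  · exact Walk.fst_mem_support_of_mem_edges _ (hf u C hC _ _ h).mem_edges
  · exact Walk.snd_mem_support_of_mem_edges _ (hf u C hC _ _ h).mem_edges

theorem CycInv.supp_iff {W : Type*} [Fintype W] {G : SimpleGraph W} {f : G ≃g G}
    (hf : CycInv G f) {u : W}
    {C : G.Walk u u} (hC : C.IsCycle) (z : W) : f z ∈ C.support ↔ z ∈ C.support := by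
  classical
  refine ⟨fun h => ?_, hf.supp hC⟩
  have hsub : C.support.toFinset.image f ⊆ C.support.toFinset := by
    intro a ha
    simp only [Finset.mem_image, List.mem_toFinset] at ha ⊢
    obtain ⟨b, hb, rfl⟩ := ha
    exact hf.supp hC hb
  have heq := Finset.eq_of_subset_of_card_le hsub
    (by rw [Finset.card_image_of_injective _ f.injective])
  have : f z ∈ C.support.toFinset.image f := by rw [heq]; simpa using h
  simp only [Finset.mem_image, List.mem_toFinset] at this
  obtain ⟨b, hb, hbz⟩ := this
  rwa [← f.injective hbz]

theorem exists_cycle_in {W : Type*} [Fintype W] {G : SimpleGraph W} (T : Set W) (w c : W)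
    (hw : w ∈ T) (hc : c ∈ T) (hwc : G.Adj w c)
    (hmin : ∀ v : W, 2 ≤ (G.neighborSet v).ncard)
    (hT : ∀ x ∈ T, x ≠ w → ∀ y, G.Adj x y → y ∈ T) :
    ∃ (u : W) (C : G.Walk u u), C.IsCycle ∧ ∀ z ∈ C.support, z ∈ T := by
  classical
  let P : ℕ → Prop := fun n => ∃ (x : W) (p : G.Walk x w), p.IsPath ∧ x ≠ w ∧
    (∀ z ∈ p.support, z ∈ T) ∧ p.length = n
  have h1 : P 1 := ⟨c, Walk.cons hwc.symm Walk.nil, by simp [hwc.ne.symm], hwc.ne.symm,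
    by simp [hw, hc], by simp⟩
  have hb : ∀ n, P n → n ≤ Fintype.card W := by
    rintro n ⟨x, p, hp, -, -, rfl⟩
    exact hp.length_lt.le
  obtain ⟨x, p, hp, hxw, hpT, hlen⟩ := Nat.findGreatest_spec (hb 1 h1) h1
  obtain ⟨y, hy, hys⟩ : ∃ y ∈ G.neighborSet x, y ≠ p.snd :=
    Set.exists_ne_of_one_lt_ncard (by have := hmin x; omega) _
  have hxy : G.Adj x y := hy
  by_cases hyp : y ∈ p.support
  · refine ⟨y, Walk.cons hxy.symm (p.takeUntil y hyp), ?_, ?_⟩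
    · rw [Walk.cons_isCycle_iff]
      refine ⟨hp.takeUntil hyp, fun h => hys ?_⟩
      apply hp.eq_snd_of_mem_edges
      rw [Sym2.eq_swap]
      exact Walk.edges_takeUntil_subset_edges _ _ h
    · intro z hz
      rw [Walk.support_cons, List.mem_cons] at hz
      rcases hz with rfl | hz
      · exact hpT _ hyp
      · exact hpT _ (Walk.support_takeUntil_subset_support _ _ hz)
  · exfalso
    have hnew : P (p.length + 1) := ⟨y, Walk.cons hxy.symm p, by
      rw [Walk.cons_isPath_iff]; exact ⟨hp, hyp⟩, by
      rintro rfl; exact hyp p.end_mem_support, by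
      intro z hz
      rw [Walk.support_cons, List.mem_cons] at hz
      rcases hz with rfl | hz
      · exact hT x (hpT _ p.start_mem_support) hxw _ hxy
      · exact hpT _ hz, by simp⟩
    have := Nat.le_findGreatest (hb _ hnew) hnew
    omega

/-- `x` is reachable from `c` avoiding `S`. -/
def Kc {W : Type*} (G : SimpleGraph W) (S : Set W) (c x : W) : Prop :=
  ∃ q : G.Walk c x, ∀ z ∈ q.support, z ∉ S

theorem Kc.notMem {W : Type*} {G : SimpleGraph W} {S : Set W} {c x : W} (h : Kc G S c x) :
    x ∉ S := h.elim fun q hq => hq _ q.end_mem_support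

theorem Kc.step {W : Type*} {G : SimpleGraph W} {S : Set W} {c x y : W} (h : Kc G S c x)
    (hxy : G.Adj x y) (hy : y ∉ S) : Kc G S c y := by
  obtain ⟨q, hq⟩ := h
  refine ⟨q.concat hxy, fun z hz => ?_⟩
  rw [Walk.support_concat] at hz
  simp only [List.mem_append, List.concat_eq_append, List.mem_singleton] at hz
  rcases hz with hz | rfl
  · exact hq _ hz
  · exact hy

theorem comp_inv {W : Type*} [Fintype W] {G : SimpleGraph W} {f : G ≃g G} (hf : CycInv G f)
    (hmin : ∀ v : W, 2 ≤ (G.neighborSet v).ncard)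
    (S : Set W) (hS : ∀ z, f z ∈ S ↔ z ∈ S) (w c : W) (hw : w ∈ S) (hc : c ∉ S)
    (hwc : G.Adj w c) (honly : ∀ x y, Kc G S c x → G.Adj x y → y ∈ S → y = w) :
    Kc G S c (f c) := by
  have hcc : Kc G S c c := ⟨Walk.nil, by simpa using hc⟩
  obtain ⟨u, C, hC, hCT⟩ := exists_cycle_in {x | Kc G S c x ∨ x = w} w c (Or.inr rfl) (Or.inl hcc)
    hwc hmin (by
      rintro x (hx | hx) hxw y hxy
      · by_cases hy : y ∈ S
        · exact Or.inr (honly x y hx hxy hy)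
        · exact Or.inl (hx.step hxy hy)
      · exact absurd hx hxw)
  obtain ⟨z, hz, hzw⟩ : ∃ z ∈ C.support, z ≠ w := by
    by_cases huw : u = w
    · refine ⟨C.snd, C.snd_mem_support_of_mem_edges (C.mk_start_snd_mem_edges hC.not_nil), ?_⟩
      rw [← huw]
      exact (C.adj_snd hC.not_nil).ne.symm
    · exact ⟨u, C.start_mem_support, huw⟩
  have hKz : Kc G S c z := (hCT z hz).resolve_right hzw
  have hfz : Kc G S c (f z) := by
    refine (hCT _ (hf.supp hC hz)).resolve_right ?_
    intro h
    exact hKz.notMem ((hS z).1 (by rw [h]; exact hw))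
  obtain ⟨q, hq⟩ := hKz
  obtain ⟨r, hr⟩ := hfz
  refine ⟨r.append (q.map f.toHom).reverse, fun a ha => ?_⟩
  rw [Walk.mem_support_append_iff] at ha
  rcases ha with ha | ha
  · exact hr a ha
  · rw [Walk.support_reverse, List.mem_reverse, Walk.support_map, List.mem_map] at ha
    obtain ⟨b, hb, rfl⟩ := ha
    exact fun h => hq b hb ((hS b).1 h)

theorem fixed_step {W : Type*} [Fintype W] {G : SimpleGraph W} {f : G ≃g G} (hf : CycInv G f)
    (hmin : ∀ v : W, 2 ≤ (G.neighborSet v).ncard) (u v : W) (hu : f u = u) (huv : G.Adj u v) :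
    f v = v := by
  classical
  by_contra hne
  obtain ⟨q0, hq0⟩ := comp_inv hf hmin {u} (by
    intro z
    simp only [Set.mem_singleton_iff]
    constructor
    · intro h; exact f.injective (h.trans hu.symm)
    · rintro rfl; exact hu) u v rfl (by simpa using huv.ne.symm) huv (fun x y _ _ hy => hy)
  have hq : ∀ z ∈ q0.bypass.support, z ≠ u := fun z hz =>
    hq0 z (q0.support_bypass_subset_support hz)
  have hqp := q0.bypass_isPath
  set q := q0.bypass
  have hfu : G.Adj (f v) u := by
    have := f.map_adj_iff.2 huv.symm
    rwa [hu] at this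
  have huq : u ∉ q.support := fun h => hq u h rfl
  have hC : (Walk.cons huv (q.append (Walk.cons hfu Walk.nil))).IsCycle := by
    rw [Walk.cons_isCycle_iff]
    refine ⟨?_, ?_⟩
    · rw [← Walk.concat_eq_append, Walk.concat_isPath_iff]
      exact ⟨hqp, huq⟩
    · rw [Walk.edges_append, List.mem_append]
      rintro (h | h)
      · exact huq (q.fst_mem_support_of_mem_edges h)
      · simp only [Walk.edges_cons, Walk.edges_nil, List.mem_singleton, Sym2.eq_iff] at h
        rcases h with ⟨-, h⟩ | ⟨-, h⟩
        · exact huv.ne h.symm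
        · exact hne h.symm
  have := hf _ _ hC u v (by rw [inD_cons]; left; exact ⟨rfl, rfl⟩)
  rw [hu, inD_cons, inD_append, inD_cons] at this
  rcases this with h | h | h | h
  · exact hne h.2
  · exact huq (q.fst_mem_support_of_mem_edges h.mem_edges)
  · exact hfu.ne h.1.symm
  · simp [InD] at h

theorem cycle_of_paths {W : Type*} {G : SimpleGraph W} {u v : W} {p : G.Walk u v}
    {q : G.Walk v u} (hp : p.IsPath) (hq : q.IsPath) (huv : u ≠ v)
    (hs : ∀ z ∈ p.support, z ∈ q.support → z = u ∨ z = v)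
    (he : ∀ e ∈ p.edges, e ∉ q.edges) : (p.append q).IsCycle := by
  rw [Walk.isCycle_def]
  refine ⟨?_, ?_, ?_⟩
  · rw [Walk.isTrail_def, Walk.edges_append, List.nodup_append']
    exact ⟨hp.isTrail.edges_nodup, hq.isTrail.edges_nodup, fun e h1 h2 => he e h1 h2⟩
  · intro h
    have h1 : v ∈ (p.append q).support := by
      rw [Walk.mem_support_append_iff]; left; exact p.end_mem_support
    rw [h] at h1
    simp at h1
    exact huv h1.symm
  · rw [Walk.tail_support_append, List.nodup_append']
    refine ⟨hp.support_nodup.tail, hq.support_nodup.tail, fun z h1 h2 => ?_⟩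
    have hp' := hp.support_nodup
    have hq' := hq.support_nodup
    rw [← Walk.cons_tail_support, List.nodup_cons] at hp' hq'
    rcases hs z (List.mem_of_mem_tail h1) (List.mem_of_mem_tail h2) with rfl | rfl
    · exact hp'.1 h1
    · exact hq'.1 h2

theorem theta_fixed {W : Type*} {G : SimpleGraph W} {f : G ≃g G} (hf : CycInv G f) {w w2 : W}
    (hne : w ≠ w2) (C : G.Walk w w) (hC : C.IsCycle) (hw2 : w2 ∈ C.support) (Q : G.Walk w w2)
    (hQ : Q.IsPath) (hQC : ∀ z ∈ Q.support, z ∈ C.support → z = w ∨ z = w2)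
    (hQe : ∀ e ∈ Q.edges, e ∉ C.edges) : f w = w := by
  obtain ⟨C1, C2, rfl⟩ := Walk.mem_support_iff_exists_append.1 hw2
  have hC1 : C1.IsPath := hC.isPath_of_append_left (Walk.not_nil_of_ne hne.symm)
  have hC2 : C2.IsPath := hC.isPath_of_append_right (Walk.not_nil_of_ne hne)
  have hB : (C1.append Q.reverse).IsCycle := by
    refine cycle_of_paths hC1 hQ.reverse hne ?_ ?_
    · intro z h1 h2
      rw [Walk.support_reverse, List.mem_reverse] at h2
      exact hQC z h2 (by rw [Walk.mem_support_append_iff]; exact Or.inl h1)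
    · intro e h1 h2
      rw [Walk.edges_reverse, List.mem_reverse] at h2
      exact hQe e h2 (by rw [Walk.edges_append, List.mem_append]; exact Or.inl h1)
  have hD : (Q.append C2).IsCycle := by
    refine cycle_of_paths hQ hC2 hne ?_ ?_
    · intro z h1 h2
      exact hQC z h1 (by rw [Walk.mem_support_append_iff]; exact Or.inr h2)
    · intro e h1 h2
      exact hQe e h1 (by rw [Walk.edges_append, List.mem_append]; exact Or.inr h2)
  have h12 : ∀ z ∈ C1.support, z ∈ C2.support → z = w ∨ z = w2 := by
    intro z h1 h2
    have := hC.support_nodup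
    rw [Walk.tail_support_append, List.nodup_append'] at this
    rw [Walk.mem_support_iff] at h1 h2
    rcases h1 with h1 | h1
    · exact Or.inl h1
    · rcases h2 with h2 | h2
      · exact Or.inr h2
      · exact absurd h2 (this.2.2 h1)
  have yA := hf.supp hC (z := w) (Walk.start_mem_support _)
  have yB := hf.supp hB (z := w) (Walk.start_mem_support _)
  have yD := hf.supp hD (z := w) (Walk.start_mem_support _)
  have hy : f w = w ∨ f w = w2 := by
    rw [Walk.mem_support_append_iff] at yB yD
    rw [Walk.support_reverse, List.mem_reverse] at yB
    rcases yB with h1 | h1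
    · rcases yD with h2 | h2
      · exact hQC _ h2 yA
      · exact h12 _ h1 h2
    · exact hQC _ h1 yA
  refine hy.resolve_right fun hy2 => ?_
  obtain ⟨a, ha⟩ : ∃ a, InD C1 w a := by
    cases C1 with
    | nil => exact absurd rfl hne
    | cons h p => exact ⟨_, (inD_cons _ _ _ _).2 (Or.inl ⟨rfl, rfl⟩)⟩
  have dA := hf _ _ hC w a ((inD_append _ _ _ _).2 (Or.inl ha))
  have dB := hf _ _ hB w a ((inD_append _ _ _ _).2 (Or.inl ha))
  rw [hy2] at dA dB
  rcases (inD_append _ _ _ _).1 dB with h | h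
  · exact not_inD_end hC1 _ h
  · have := h.mem_edges
    rw [Walk.edges_reverse, List.mem_reverse] at this
    exact hQe _ this dA.mem_edges

theorem exists_fixed {W : Type*} [Fintype W] {G : SimpleGraph W} (hG : G.Connected)
    {f : G ≃g G} (hf : CycInv G f)
    (hmin : ∀ v : W, 2 ≤ (G.neighborSet v).ncard)
    (hnotcyc : ¬ ∀ v : W, (G.neighborSet v).ncard = 2) : ∃ w, f w = w := by
  classical
  obtain ⟨w0⟩ := hG.nonempty
  obtain ⟨c0, hc0⟩ : (G.neighborSet w0).Nonempty := by
    rw [← Set.ncard_pos]; have := hmin w0; omega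
  obtain ⟨u, C0, hC0, -⟩ := exists_cycle_in Set.univ w0 c0 trivial trivial hc0 hmin
    (fun _ _ _ _ _ => trivial)
  obtain ⟨w, hw, c, hwc, hce0⟩ : ∃ w ∈ C0.support, ∃ c, G.Adj w c ∧ s(w, c) ∉ C0.edges := by
    by_contra! hcon
    have hall : ∀ {a b : W}, G.Walk a b → a ∈ C0.support → b ∈ C0.support := by
      intro a b q
      induction q with
      | nil => exact id
      | cons h q ih => exact fun ha => ih (C0.snd_mem_support_of_mem_edges (hcon _ ha _ h))
    apply hnotcyc
    intro v
    have hv : v ∈ C0.support := hall (hG.preconnected u v).some C0.start_mem_support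
    rw [← hC0.ncard_neighborSet_toSubgraph_eq_two hv]
    congr 1
    ext b
    rw [SimpleGraph.mem_neighborSet, SimpleGraph.Subgraph.mem_neighborSet,
      Walk.adj_toSubgraph_iff_mem_edges]
    exact ⟨hcon v hv b, fun h => C0.adj_of_mem_edges h⟩
  refine ⟨w, ?_⟩
  by_contra hfw
  have hC : (C0.rotate w hw).IsCycle := hC0.rotate hw
  have hce : s(w, c) ∉ (C0.rotate w hw).edges := by
    rw [(C0.rotate_edges w hw).mem_iff]; exact hce0
  generalize C0.rotate w hw = C at hC hce
  by_cases hcC : c ∈ C.support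
  · refine hfw (theta_fixed hf hwc.ne C hC hcC (Walk.cons hwc Walk.nil) ?_ ?_ ?_)
    · simp [hwc.ne]
    · intro z hz _
      simpa using hz
    · intro e he
      simp only [Walk.edges_cons, Walk.edges_nil, List.mem_singleton] at he
      rwa [he]
  · obtain ⟨x, y, hx, hxy, hyC, hyw⟩ : ∃ x y, Kc G {z | z ∈ C.support} c x ∧ G.Adj x y ∧
        y ∈ C.support ∧ y ≠ w := by
      by_contra! hcon
      have hK := comp_inv hf hmin {z | z ∈ C.support} (hf.supp_iff hC) w c C.start_mem_support
        hcC hwc (fun x y h1 h2 h3 => hcon x y h1 h2 h3)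
      exact hfw (hcon (f c) (f w) hK (f.map_adj_iff.2 hwc.symm) (hf.supp hC C.start_mem_support))
    obtain ⟨q0, hq0⟩ := hx
    have hq : ∀ z ∈ q0.bypass.support, z ∉ C.support := fun z hz =>
      hq0 z (q0.support_bypass_subset_support hz)
    have hqp := q0.bypass_isPath
    generalize q0.bypass = q at hq hqp
    refine hfw (theta_fixed hf hyw.symm C hC hyC
      (Walk.cons hwc (q.append (Walk.cons hxy Walk.nil))) ?_ ?_ ?_)
    · rw [Walk.cons_isPath_iff, ← Walk.concat_eq_append, Walk.concat_isPath_iff]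
      refine ⟨⟨hqp, fun h => hq _ h hyC⟩, ?_⟩
      rw [Walk.concat_eq_append, Walk.mem_support_append_iff]
      rintro (h | h)
      · exact hq _ h C.start_mem_support
      · simp only [Walk.support_cons, Walk.support_nil, List.mem_cons, List.not_mem_nil,
          or_false] at h
        rcases h with h | h
        · exact hq x q.end_mem_support (h ▸ C.start_mem_support)
        · exact hyw h.symm
    · intro z hz hzC
      rw [Walk.support_cons, List.mem_cons, Walk.mem_support_append_iff] at hz
      rcases hz with h | h | h
      · exact Or.inl h
      · exact absurd hzC (hq _ h)
      · simp only [Walk.support_cons, Walk.support_nil, List.mem_cons, List.not_mem_nil,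
          or_false] at h
        rcases h with h | h
        · exact absurd hzC (hq z (h ▸ q.end_mem_support))
        · exact Or.inr h
    · intro e he heC
      rw [Walk.edges_cons, List.mem_cons, Walk.edges_append, List.mem_append] at he
      rcases he with rfl | he | he
      · exact hce heC
      · induction e with
        | h a b =>
          exact hq a (q.fst_mem_support_of_mem_edges he) (C.fst_mem_support_of_mem_edges heC)
      · simp only [Walk.edges_cons, Walk.edges_nil, List.mem_singleton] at he
        subst he
        exact hq x q.end_mem_support (C.fst_mem_support_of_mem_edges heC)

end Helpers

theorem aut_faithful_on_H1_mod_p [Fintype V]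
    (G : SimpleGraph V) (hG : G.Connected)
    (hmin : ∀ v : V, 2 ≤ (G.neighborSet v).ncard)
    (hnotcyc : ¬ ∀ v : V, (G.neighborSet v).ncard = 2)
    (p : ℕ) (hp : p.Prime) (hp2 : 2 < p) :
    ∀ f : G ≃g G, FixesH1 (ZMod p) G f → ∀ v : V, f v = v := by
  intro f hf v
  have hinv := cycInv_of_fixes p hp hp2 f hf
  obtain ⟨w, hw⟩ := exists_fixed hG hinv hmin hnotcyc
  have hall : ∀ {a b : V}, G.Walk a b → f a = a → f b = b := by
    intro a b q
    induction q with
    | nil => exact id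
    | cons h q ih => exact fun ha => ih (fixed_step hinv hmin _ _ ha h)
  exact hall (hG.preconnected w v).some hw
end

section
/- A finite connected unicyclic graph X admits a nontrivial automorphism acting trivially on H_1(X,ℤ) if and only if X is periodic (admits a nontrivial automorphism rotating its unique cycle) or X contains a pendant tree with a nontrivial root-preserving automorphism. -/
open SimpleGraph
variable {V : Type*}

variable {V : Type*}

/-- A pendant tree of `G` rooted at `w`: `A` is the vertex set of a maximal acyclic
component of `G - w` hanging at `w`, so `{w} ∪ A` induces a tree. -/
def IsPendantTree (G : SimpleGraph V) (w : V) (A : Set V) : Prop :=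
  w ∉ A ∧ A.Nonempty ∧
  (∀ a ∈ A, ∀ b : V, G.Adj a b → b = w ∨ b ∈ A) ∧
  (G.induce (insert w A)).IsTree

/-- The pendant tree rooted at `w` has a nontrivial root-preserving automorphism. -/
def HasNontrivialRootAut (G : SimpleGraph V) (w : V) (A : Set V) : Prop :=
  ∃ φ : G.induce (insert w A) ≃g G.induce (insert w A),
    φ ⟨w, Set.mem_insert w A⟩ = ⟨w, Set.mem_insert w A⟩ ∧ ∃ x, φ x ≠ x

/-- `G` is periodic: some nontrivial automorphism rotates the unique cycle. -/
def IsPeriodic [Fintype V] (G : SimpleGraph V) : Prop :=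
  ∃ (n : ℕ) (_ : 2 < n) (c : ZMod n → V), Function.Injective c ∧
    (∀ i : ZMod n, G.Adj (c i) (c (i + 1))) ∧
    ∃ (f : G ≃g G) (d : ZMod n), d ≠ 0 ∧ (∀ i : ZMod n, f (c i) = c (i + d))

namespace UniK

/-- `u v` is an edge of the closed walk `c`. -/
def CE {W : Type*} {n : ℕ} (c : ZMod n → W) (u v : W) : Prop :=
  ∃ i, (u = c i ∧ v = c (i + 1)) ∨ (v = c i ∧ u = c (i + 1))

theorem CE.symm {W : Type*} {n : ℕ} {c : ZMod n → W} {u v : W} (h : CE c u v) : CE c v u := by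
  obtain ⟨i, h⟩ := h
  exact ⟨i, h.symm⟩

/-- `G` without the edges of the closed walk `c`. -/
def del {W : Type*} {n : ℕ} (G : SimpleGraph W) (c : ZMod n → W) : SimpleGraph W where
  Adj u v := G.Adj u v ∧ ¬ CE c u v
  symm := ⟨fun _ _ h => ⟨h.1.symm, fun h' => h.2 h'.symm⟩⟩
  loopless := ⟨fun _ h => h.1.ne rfl⟩

theorem flow_bridge {W : Type*} [Fintype W] (G : SimpleGraph W) (c : W → W → ℤ)
    (hc : c ∈ cycleSpace ℤ G) (u v : W) (h : G.IsBridge s(u, v)) : c u v = 0 := by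
  classical
  obtain ⟨h1, h2, h3⟩ := hc
  rw [isBridge_iff] at h
  let S : Finset W := Finset.univ.filter fun x => (G.deleteEdges {s(u, v)}).Reachable u x
  have hS : ∀ x, x ∈ S ↔ (G.deleteEdges {s(u, v)}).Reachable u x := by simp [S]
  have e0 : ∑ x ∈ S, ∑ y, c x y = 0 := Finset.sum_eq_zero fun x _ => h3 x
  have e1 : ∑ x ∈ S, ∑ y ∈ S, c x y = 0 := by
    have : ∑ x ∈ S, ∑ y ∈ S, c x y = - ∑ x ∈ S, ∑ y ∈ S, c x y := by
      conv_lhs => rw [Finset.sum_comm]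
      rw [← Finset.sum_neg_distrib]
      refine Finset.sum_congr rfl fun x _ => ?_
      rw [← Finset.sum_neg_distrib]
      exact Finset.sum_congr rfl fun y _ => h2 y x
    omega
  have hcross : ∀ x ∈ S, ∀ y ∉ S, G.Adj x y → x = u ∧ y = v := by
    intro x hx y hy hxy
    rw [hS] at hx hy
    by_contra hne
    by_cases he : s(x, y) = s(u, v)
    · rw [Sym2.eq_iff] at he
      rcases he with he | ⟨rfl, rfl⟩
      · exact hne he
      · exact h hx
    · refine hy (hx.trans (Adj.reachable ?_))
      rw [deleteEdges_adj]
      exact ⟨hxy, he⟩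
  have e2 : ∑ x ∈ S, ∑ y ∈ Sᶜ, c x y = c u v := by
    rw [Finset.sum_eq_single u, Finset.sum_eq_single v]
    · intro y hy hyv
      refine h1 _ _ fun hadj => hyv (hcross u ((hS u).2 (Reachable.refl _)) y (by simpa using hy) hadj).2
    · intro hv
      exact absurd (by rw [Finset.mem_compl, hS]; exact h) hv
    · intro x hx hxu
      refine Finset.sum_eq_zero fun y hy => h1 _ _ fun hadj => hxu (hcross x hx y (by simpa using hy) hadj).1
    · intro hu
      exact absurd ((hS u).2 (Reachable.refl _)) hu
  have e3 : ∑ x ∈ S, ∑ y, c x y = ∑ x ∈ S, ∑ y ∈ S, c x y + ∑ x ∈ S, ∑ y ∈ Sᶜ, c x y := by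
    rw [← Finset.sum_add_distrib]
    exact Finset.sum_congr rfl fun x _ => (Finset.sum_add_sum_compl S _).symm
  omega

theorem natCast_ne {n k l : ℕ} (hk : k < n) (hl : l < n) (h : k ≠ l) : (k : ZMod n) ≠ l := by
  intro h'
  rw [ZMod.natCast_eq_natCast_iff'] at h'
  rw [Nat.mod_eq_of_lt hk, Nat.mod_eq_of_lt hl] at h'
  exact h h'

theorem zmod_induction {n : ℕ} [NeZero n] {P : ZMod n → Prop} (h0 : P 0)
    (hs : ∀ i, P i → P (i + 1)) (i : ZMod n) : P i := by
  have : ∀ k : ℕ, P (k : ZMod n) := by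
    intro k
    induction k with
    | zero => simpa using h0
    | succ k ih => push_cast; exact hs _ ih
  simpa using this i.val

theorem cyc_reach {W : Type*} {n : ℕ} [NeZero n] (K : SimpleGraph W) (c : ZMod n → W)
    (hc : ∀ i, K.Adj (c i) (c (i + 1))) (i j : ZMod n) : K.Reachable (c i) (c j) := by
  have h : ∀ i, K.Reachable (c 0) (c i) :=
    zmod_induction (Reachable.refl _) fun i hi => hi.trans (hc i).reachable
  exact (h i).symm.trans (h j)

theorem cyc_not_bridge {W : Type*} {n : ℕ} (hn : 2 < n) (K : SimpleGraph W) (c : ZMod n → W)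
    (hinj : Function.Injective c)
    (hc : ∀ i, K.Adj (c i) (c (i + 1))) : ¬ K.IsBridge s(c 0, c 1) := by
  rw [isBridge_iff, not_not]
  have key : ∀ k : ℕ, k < n → (K.deleteEdges {s(c 0, c 1)}).Reachable (c 1) (c ((k + 1 : ℕ))) := by
    intro k
    induction k with
    | zero => intro _; simp
    | succ k ih =>
      intro hk
      refine (ih (by omega)).trans (Adj.reachable ?_)
      rw [deleteEdges_adj]
      have h := hc ((k + 1 : ℕ))
      push_cast at h ⊢
      refine ⟨h, fun he => ?_⟩
      rw [Set.mem_singleton_iff, Sym2.eq_iff] at he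
      have n1 : ((k + 1 : ℕ) : ZMod n) ≠ (0 : ℕ) := natCast_ne hk (by omega) (by omega)
      push_cast at n1
      rcases he with ⟨h1, _⟩ | ⟨h1, h2⟩
      · exact n1 (hinj h1)
      · have h1 := hinj h1
        have h2 := hinj h2
        rw [h1] at h2
        refine natCast_ne (n := n) (k := 2) (l := 0) hn (by omega) (by omega) ?_
        push_cast
        rw [← h2]; ring
  have := key (n - 1) (by omega)
  rw [show n - 1 + 1 = n by omega] at this
  simpa using this.symm

theorem bridge_of_not_CE {W : Type*} [Fintype W] {n : ℕ} (hn : 2 < n) (G : SimpleGraph W)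
    (hG : G.Connected) (huni : G.edgeSet.ncard = Fintype.card W) (c : ZMod n → W)
    (hinj : Function.Injective c) (hc : ∀ i, G.Adj (c i) (c (i + 1))) {u v : W}
    (huv : G.Adj u v) (h : ¬ CE c u v) : G.IsBridge s(u, v) := by
  by_contra hb
  have hcon := hG.connected_delete_edge_of_not_isBridge hb
  have hT : (G.deleteEdges {s(u, v)}).IsTree := by
    rw [isTree_iff_connected_and_card]
    refine ⟨hcon, ?_⟩
    rw [edgeSet_deleteEdges, Nat.card_coe_set_eq, Set.ncard_sdiff_singleton_add_one
      (by simpa using huv) (Set.toFinite _), huni, Nat.card_eq_fintype_card]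
  have hc' : ∀ i, (G.deleteEdges {s(u, v)}).Adj (c i) (c (i + 1)) := by
    intro i
    rw [deleteEdges_adj]
    refine ⟨hc i, fun he => h ?_⟩
    rw [Set.mem_singleton_iff, Sym2.eq_iff] at he
    rcases he with he | he
    · exact ⟨i, Or.inl ⟨he.1.symm, he.2.symm⟩⟩
    · exact ⟨i, Or.inr ⟨he.1.symm, he.2.symm⟩⟩
  refine cyc_not_bridge hn _ c hinj hc' (isAcyclic_iff_forall_isBridge.1 hT.isAcyclic ?_)
  have := hc' 0
  rw [zero_add] at this
  exact this

theorem exists_cycle {W : Type*} [Fintype W] (G : SimpleGraph W)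
    (hG : G.Connected) (huni : G.edgeSet.ncard = Fintype.card W) :
    ∃ (n : ℕ) (_ : 2 < n) (c : ZMod n → W), Function.Injective c ∧
      ∀ i, G.Adj (c i) (c (i + 1)) := by
  have hna : ¬ G.IsAcyclic := by
    intro h
    have := (isTree_iff_connected_and_card (G := G)).1 ⟨hG, h⟩
    rw [Nat.card_coe_set_eq, huni, Nat.card_eq_fintype_card] at this
    omega
  unfold IsAcyclic at hna
  push Not at hna
  obtain ⟨v, p, hp⟩ := hna
  have h3 := hp.three_le_length
  have : NeZero p.length := ⟨by omega⟩
  refine ⟨p.length, h3, fun i => p.getVert i.val, ?_, ?_⟩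
  · intro i j hij
    have hi := i.val_lt
    have hj := j.val_lt
    exact ZMod.val_injective _ (hp.getVert_injOn' (by simp; omega) (by simp; omega) hij)
  · intro i
    have hi := i.val_lt
    have hadj := p.adj_getVert_succ hi
    by_cases h : i.val + 1 < p.length
    · have : (i + 1).val = i.val + 1 := by
        have h1 : i + 1 = ((i.val + 1 : ℕ) : ZMod p.length) := by simp
        rw [h1, ZMod.val_natCast_of_lt h]
      simpa [this] using hadj
    · have h' : i.val + 1 = p.length := by omega
      have : i + 1 = 0 := by
        have h1 : i + 1 = ((i.val + 1 : ℕ) : ZMod p.length) := by simp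
        rw [h1, h', ZMod.natCast_self]
      rw [h'] at hadj
      simpa [this] using hadj

open Classical in
/-- The flow around the cycle. -/
noncomputable def cflow {W : Type*} {n : ℕ} [NeZero n] (c : ZMod n → W) (u v : W) : ℤ :=
  (∑ i, if u = c i ∧ v = c (i + 1) then 1 else 0) - ∑ i, if v = c i ∧ u = c (i + 1) then 1 else 0

theorem cflow_mem {W : Type*} [Fintype W] {n : ℕ} [NeZero n] (G : SimpleGraph W) (c : ZMod n → W)
    (hc : ∀ i, G.Adj (c i) (c (i + 1))) : cflow c ∈ cycleSpace ℤ G := by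
  classical
  refine ⟨fun u v h => ?_, fun u v => by unfold cflow; ring, fun u => ?_⟩
  · unfold cflow
    rw [Finset.sum_eq_zero, Finset.sum_eq_zero, sub_zero]
    · intro i _
      rw [if_neg]
      rintro ⟨rfl, rfl⟩
      exact h (hc i).symm
    · intro i _
      rw [if_neg]
      rintro ⟨rfl, rfl⟩
      exact h (hc i)
  · unfold cflow
    rw [Finset.sum_sub_distrib, Finset.sum_comm, sub_eq_zero]
    conv_rhs => rw [Finset.sum_comm]
    simp only [ite_and]
    have e : ∀ (P : Prop) [Decidable P] (x : W),
        (∑ v, if P then if v = x then (1 : ℤ) else 0 else 0) = if P then 1 else 0 := by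
      intro P _ x
      split_ifs <;> simp
    have e' : ∀ (P : Prop) [Decidable P] (x : W),
        (∑ v, if v = x then if P then (1 : ℤ) else 0 else 0) = if P then 1 else 0 := by
      intro P _ x
      simp
    simp only [e, e']
    exact (Equiv.sum_comp (Equiv.addRight (1 : ZMod n)) fun i => if u = c i then (1 : ℤ) else 0).symm

theorem cflow_eq_one {W : Type*} {n : ℕ} [NeZero n] (hn : 2 < n) (c : ZMod n → W)
    (hinj : Function.Injective c) (i : ZMod n) : cflow c (c i) (c (i + 1)) = 1 := by
  classical
  unfold cflow
  rw [Finset.sum_eq_single i, Finset.sum_eq_zero]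
  · simp
  · intro j _
    rw [if_neg]
    rintro ⟨h1, h2⟩
    have h1 := hinj h1
    have h2 := hinj h2
    refine natCast_ne (n := n) (k := 2) (l := 0) hn (by omega) (by omega) ?_
    rw [← h1] at h2
    push_cast
    linear_combination -h2
  · intro j _ hj
    rw [if_neg]
    rintro ⟨h1, _⟩
    exact hj (hinj h1).symm
  · simp

theorem of_cflow_eq_one {W : Type*} {n : ℕ} [NeZero n] (c : ZMod n → W) (u v : W)
    (h : cflow c u v = 1) : ∃ i, u = c i ∧ v = c (i + 1) := by
  classical
  by_contra hne
  push Not at hne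
  unfold cflow at h
  rw [Finset.sum_eq_zero fun i _ => if_neg fun hh => hne i hh.1 hh.2] at h
  have : (0 : ℤ) ≤ ∑ i, if v = c i ∧ u = c (i + 1) then 1 else 0 :=
    Finset.sum_nonneg fun i _ => by split_ifs <;> simp
  omega

/-- Distinct cycle vertices are not joined off the cycle. -/
theorem not_reach {W : Type*} [Fintype W] {n : ℕ} (hn : 2 < n) (G : SimpleGraph W)
    (hG : G.Connected) (huni : G.edgeSet.ncard = Fintype.card W) (c : ZMod n → W)
    (hinj : Function.Injective c) (hc : ∀ i, G.Adj (c i) (c (i + 1))) (i j : ZMod n)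
    (h : (del G c).Reachable (c i) (c j)) : c i = c j := by
  classical
  have : NeZero n := ⟨by omega⟩
  obtain ⟨p, hp⟩ := h.exists_isPath
  by_contra hne
  generalize hx : c i = x at *
  cases p with
  | nil => exact hne rfl
  | @cons _ y _ hadj q =>
    rw [Walk.cons_isPath_iff] at hp
    have hb := bridge_of_not_CE hn G hG huni c hinj hc hadj.1 hadj.2
    rw [isBridge_iff] at hb
    have hle : del G c ≤ G := fun _ _ h => h.1
    have r1 : (G.deleteEdges {s(x, y)}).Reachable y (c j) := by
      refine ⟨(q.mapLe hle).toDeleteEdge _ fun he => hp.2 ?_⟩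
      have := (q.mapLe hle).fst_mem_support_of_mem_edges he
      simpa using this
    have r2 : (G.deleteEdges {s(x, y)}).Reachable (c i) (c j) := by
      refine cyc_reach _ c (fun k => ?_) i j
      rw [deleteEdges_adj]
      refine ⟨hc k, fun he => hadj.2 ?_⟩
      rw [Set.mem_singleton_iff, Sym2.eq_iff] at he
      rcases he with he | he
      · exact ⟨k, Or.inl ⟨he.1.symm, he.2.symm⟩⟩
      · exact ⟨k, Or.inr ⟨he.1.symm, he.2.symm⟩⟩
    rw [hx] at r2
    exact hb (r2.trans r1.symm)

theorem periodic_imp {W : Type*} [Fintype W] (G : SimpleGraph W)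
    (hG : G.Connected) (huni : G.edgeSet.ncard = Fintype.card W) (h : IsPeriodic G) :
    ∃ f : G ≃g G, (∃ v : W, f v ≠ v) ∧ FixesH1 ℤ G f := by
  classical
  obtain ⟨n, hn, c, hinj, hc, f, d, hd, hf⟩ := h
  have : NeZero n := ⟨by omega⟩
  refine ⟨f, ⟨c 0, fun h => hd ?_⟩, ?_⟩
  · rw [hf, zero_add] at h
    exact hinj h
  intro g hg
  have hzero : ∀ u v, ¬ CE c u v → g u v = 0 := by
    intro u v h
    by_cases huv : G.Adj u v
    · exact flow_bridge G g hg u v (bridge_of_not_CE hn G hG huni c hinj hc huv h)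
    · exact hg.1 u v huv
  have hstep : ∀ i, g (c (i + 1)) (c (i + 1 + 1)) = g (c i) (c (i + 1)) := by
    intro i
    have hs := hg.2.2 (c (i + 1))
    have hne : c (i + 1 + 1) ≠ c i := by
      intro h
      have h := hinj h
      refine natCast_ne (n := n) (k := 2) (l := 0) hn (by omega) (by omega) ?_
      push_cast
      linear_combination h
    rw [← Finset.sum_subset (Finset.subset_univ {c (i + 1 + 1), c i}), Finset.sum_pair hne] at hs
    · have := hg.2.1 (c (i + 1)) (c i)
      omega
    · intro x _ hx
      apply hzero
      rintro ⟨j, ⟨h1, rfl⟩ | ⟨rfl, h1⟩⟩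
      · rw [← hinj h1] at hx
        simp at hx
      · have h1 := hinj h1
        rw [add_left_inj] at h1
        rw [← h1] at hx
        simp at hx
  have hconst : ∀ i, g (c i) (c (i + 1)) = g (c 0) (c (0 + 1)) :=
    zmod_induction rfl fun i hi => (hstep i).trans hi
  have hdir : ∀ i, g (f (c i)) (f (c (i + 1))) = g (c i) (c (i + 1)) := by
    intro i
    rw [hf, hf, hconst i, show i + 1 + d = i + d + 1 by ring, hconst (i + d)]
  intro u v
  by_cases h : CE c u v
  · obtain ⟨i, ⟨rfl, rfl⟩ | ⟨rfl, rfl⟩⟩ := h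
    · exact hdir i
    · rw [hg.2.1, hdir, hg.2.1 (c (i + 1))]
  · rw [hzero u v h]
    apply hzero
    rintro ⟨j, hj⟩
    apply h
    have e1 : c j = f (c (j - d)) := by rw [hf]; congr 1; ring
    have e2 : c (j + 1) = f (c (j - d + 1)) := by rw [hf]; congr 1; ring
    rw [e1, e2] at hj
    simp only [f.injective.eq_iff] at hj
    exact ⟨_, hj⟩

theorem pendant_bridge {W : Type*} (G : SimpleGraph W) (w : W) (A : Set W)
    (h : IsPendantTree G w A) (u v : W) (hu : u ∈ insert w A) (hv : v ∈ insert w A)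
    (huv : G.Adj u v) : G.IsBridge s(u, v) := by
  classical
  obtain ⟨_, _, hcl, hT⟩ := h
  have hb := isAcyclic_iff_forall_adj_isBridge.1 hT.isAcyclic (v := ⟨u, hu⟩) (w := ⟨v, hv⟩) huv
  rw [isBridge_iff] at hb ⊢
  intro hr
  let r : W → ↥(insert w A) := fun x => if hx : x ∈ insert w A then ⟨x, hx⟩ else ⟨w, by simp⟩
  have hrS : ∀ x (hx : x ∈ insert w A), r x = ⟨x, hx⟩ := fun x hx => dif_pos hx
  have hrN : ∀ x, x ∉ insert w A → r x = ⟨w, by simp⟩ := fun x hx => dif_neg hx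
  apply hb
  rw [← hrS u hu, ← hrS v hv]
  obtain ⟨p⟩ := hr
  have key : ∀ x y (p : (G.deleteEdges {s(u, v)}).Walk x y),
      ((G.induce (insert w A)).deleteEdges {s(r u, r v)}).Reachable (r x) (r y) := by
    intro x y p
    induction p with
    | nil => exact Reachable.refl _
    | @cons x y z hadj q ih =>
      refine Reachable.trans ?_ ih
      rw [deleteEdges_adj] at hadj
      by_cases hx : x ∈ insert w A <;> by_cases hy : y ∈ insert w A
      · apply Adj.reachable
        rw [deleteEdges_adj, hrS x hx, hrS y hy, hrS u hu, hrS v hv]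
        refine ⟨hadj.1, fun he => hadj.2 ?_⟩
        simpa using he
      · have : x = w := by
          rcases hx with hx | hx
          · exact hx
          · exact absurd (hcl x hx y hadj.1) hy
        subst this
        rw [hrS x hx, hrN y hy]
      · have : y = w := by
          rcases hy with hy | hy
          · exact hy
          · exact absurd (hcl y hy x hadj.1.symm) hx
        subst this
        rw [hrS y hy, hrN x hx]
      · rw [hrN x hx, hrN y hy]
  exact key u v p

theorem pendant_imp {W : Type*} [Fintype W] (G : SimpleGraph W) (w : W) (A : Set W)
    (h : IsPendantTree G w A) (h' : HasNontrivialRootAut G w A) :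
    ∃ f : G ≃g G, (∃ v : W, f v ≠ v) ∧ FixesH1 ℤ G f := by
  classical
  have hcl := h.2.2.1
  obtain ⟨φ, hw, x, hx⟩ := h'
  let e : Equiv.Perm W := Equiv.Perm.ofSubtype (p := (· ∈ insert w A)) φ.toEquiv
  have eS : ∀ x (hx : x ∈ insert w A), e x = φ ⟨x, hx⟩ := fun x hx =>
    Equiv.Perm.ofSubtype_apply_of_mem _ hx
  have eN : ∀ x, x ∉ insert w A → e x = x := fun x hx =>
    Equiv.Perm.ofSubtype_apply_of_not_mem _ hx
  have ew : e w = w := by rw [eS w (by simp), hw]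
  have eS' : ∀ x ∈ insert w A, e x ∈ insert w A := fun x hx => by
    rw [eS x hx]; exact (φ ⟨x, hx⟩).2
  have eA : ∀ x ∈ insert w A, x ≠ w → e x ∈ A := by
    intro x hx hxw
    rcases eS' x hx with h | h
    · exact absurd (e.injective (h.trans ew.symm)) hxw
    · exact h
  -- adjacency between inside and outside
  have hcross : ∀ x ∈ insert w A, ∀ y, y ∉ insert w A → G.Adj x y → x = w := by
    intro x hx y hy hxy
    rcases hx with hx | hx
    · exact hx
    · exact absurd (hcl x hx y hxy) hy
  have hcr : ∀ x ∈ insert w A, ∀ y, y ∉ insert w A → (G.Adj (e x) (e y) ↔ G.Adj x y) := by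
    intro x hx y hy
    rw [eN y hy]
    constructor
    · intro hh
      have := hcross _ (eS' x hx) y hy hh
      have hxw : x = w := e.injective (this.trans ew.symm)
      rw [hxw, ew] at hh
      rwa [hxw]
    · intro hh
      rw [hcross _ hx y hy hh, ew]
      rwa [hcross _ hx y hy hh] at hh
  have hadj : ∀ x y, G.Adj (e x) (e y) ↔ G.Adj x y := by
    intro x y
    by_cases hx : x ∈ insert w A <;> by_cases hy : y ∈ insert w A
    · rw [eS x hx, eS y hy]
      exact φ.map_rel_iff (a := ⟨x, hx⟩) (b := ⟨y, hy⟩)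
    · exact hcr x hx y hy
    · rw [adj_comm, hcr y hy x hx, adj_comm]
    · rw [eN x hx, eN y hy]
  let f : G ≃g G := ⟨e, fun {x y} => hadj x y⟩
  have fe : ∀ x, f x = e x := fun _ => rfl
  refine ⟨f, ⟨x, fun hh => hx ?_⟩, ?_⟩
  · rw [fe, eS x x.2] at hh
    exact Subtype.ext hh
  intro g hg u v
  rw [fe, fe]
  by_cases huv : G.Adj u v
  · by_cases hu : u ∈ insert w A <;> by_cases hv : v ∈ insert w A
    · rw [flow_bridge G g hg u v (pendant_bridge G w A h u v hu hv huv),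
        flow_bridge G g hg _ _ (pendant_bridge G w A h _ _ (eS' u hu) (eS' v hv) ((hadj u v).2 huv))]
    · rw [eN v hv, hcross u hu v hv huv, ew]
    · rw [eN u hu, hcross v hv u hu huv.symm, ew]
    · rw [eN u hu, eN v hv]
  · rw [hg.1 u v huv, hg.1 _ _ fun hh => huv ((hadj u v).1 hh)]

theorem kernel_imp {W : Type*} [Fintype W] (G : SimpleGraph W)
    (hG : G.Connected) (huni : G.edgeSet.ncard = Fintype.card W) (f : G ≃g G) (v : W)
    (hv : f v ≠ v) (hf : FixesH1 ℤ G f) : IsPeriodic G ∨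
      ∃ (w : W) (A : Set W), IsPendantTree G w A ∧ HasNontrivialRootAut G w A := by
  classical
  obtain ⟨n, hn, c, hinj, hc⟩ := exists_cycle G hG huni
  have : NeZero n := ⟨by omega⟩
  have h1 : ∀ i, ∃ j, f (c i) = c j ∧ f (c (i + 1)) = c (j + 1) := by
    intro i
    apply of_cflow_eq_one
    rw [hf _ (cflow_mem G c hc), cflow_eq_one hn c hinj]
  obtain ⟨d, hd, _⟩ := h1 0
  have hrot : ∀ i, f (c i) = c (i + d) := by
    apply zmod_induction
    · rw [hd, zero_add]
    · intro i hi
      obtain ⟨j, hj1, hj2⟩ := h1 i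
      rw [hi] at hj1
      rw [hj2, ← hinj hj1]
      congr 1; ring
  by_cases hd0 : d ≠ 0
  · exact Or.inl ⟨n, hn, c, hinj, hc, f, d, hd0, hrot⟩
  right
  push Not at hd0
  subst hd0
  simp only [add_zero] at hrot
  have hCE : ∀ x y, CE c (f x) (f y) ↔ CE c x y := by
    intro x y
    refine exists_congr fun i => ?_
    have e : ∀ z i, f z = c i ↔ z = c i := fun z i => by
      conv_lhs => rw [← hrot i]
      exact f.injective.eq_iff
    simp only [e]
  have hHadj : ∀ x y, (del G c).Adj (f x) (f y) ↔ (del G c).Adj x y := by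
    intro x y
    exact and_congr f.map_rel_iff (not_congr (hCE x y))
  let fH : del G c ≃g del G c := ⟨f.toEquiv, fun {x y} => hHadj x y⟩
  have hex : ∀ x y (p : G.Walk x y), y = c 0 → ∃ k, (del G c).Reachable x (c k) := by
    intro x y p
    induction p with
    | nil => rintro rfl; exact ⟨0, Reachable.refl _⟩
    | @cons x y z hadj q ih =>
      intro hz
      by_cases h : CE c x y
      · obtain ⟨i, ⟨rfl, _⟩ | ⟨_, rfl⟩⟩ := h
        · exact ⟨_, Reachable.refl _⟩
        · exact ⟨_, Reachable.refl _⟩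
      · obtain ⟨k, hk⟩ := ih hz
        have : (del G c).Adj x y := ⟨hadj, h⟩
        exact ⟨k, this.reachable.trans hk⟩
  obtain ⟨p⟩ := hG.preconnected v (c 0)
  obtain ⟨k, hk⟩ := hex v _ p rfl
  have hvk : v ≠ c k := fun h => hv (by rw [h, hrot])
  let A : Set W := {x | x ≠ c k ∧ (del G c).Reachable x (c k)}
  have hS : ∀ x, x ∈ insert (c k) A ↔ (del G c).Reachable x (c k) := by
    intro x
    by_cases hx : x = c k
    · subst hx; simp
    · simp [A, hx]
  have hCEno : ∀ x y, (del G c).Reachable x (c k) → (del G c).Reachable y (c k) → G.Adj x y →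
      ¬ CE c x y := by
    rintro x y hx hy hxy ⟨i, ⟨rfl, rfl⟩ | ⟨rfl, rfl⟩⟩
    · exact hxy.ne (not_reach hn G hG huni c hinj hc _ _ (hx.trans hy.symm))
    · exact hxy.ne (not_reach hn G hG huni c hinj hc _ _ (hx.trans hy.symm))
  refine ⟨c k, A, ⟨fun h => h.1 rfl, ⟨v, hvk, hk⟩, ?_, ?_, ?_⟩, ?_⟩
  · intro a ha b hab
    by_cases h : CE c a b
    · exfalso
      obtain ⟨i, ⟨rfl, _⟩ | ⟨_, rfl⟩⟩ := h
      · exact ha.1 (not_reach hn G hG huni c hinj hc _ _ ha.2)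
      · exact ha.1 (not_reach hn G hG huni c hinj hc _ _ ha.2)
    · have hh : (del G c).Adj a b := ⟨hab, h⟩
      have := (hS b).2 (hh.symm.reachable.trans ha.2)
      exact this
  · have key : ∀ x y (p : (del G c).Walk x y), y = c k → ∀ (hx : x ∈ insert (c k) A),
        (G.induce (insert (c k) A)).Reachable ⟨x, hx⟩ ⟨c k, by simp⟩ := by
      intro x y p
      induction p with
      | nil => rintro rfl _; exact Reachable.refl _
      | @cons x y z hadj q ih =>
        intro hz hx
        have hy : y ∈ insert (c k) A := (hS y).2 (hadj.symm.reachable.trans ((hS x).1 hx))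
        refine Reachable.trans (Adj.reachable ?_) (ih hz hy)
        exact hadj.1
    have key' : ∀ x : ↥(insert (c k) A),
        (G.induce (insert (c k) A)).Reachable x ⟨c k, by simp⟩ := by
      rintro ⟨x, hx⟩
      obtain ⟨p⟩ := (hS x).1 hx
      exact key x _ p rfl hx
    have : Nonempty ↥(insert (c k) A) := ⟨⟨c k, by simp⟩⟩
    exact ⟨fun x y => (key' x).trans (key' y).symm⟩
  · rw [isAcyclic_iff_forall_adj_isBridge]
    rintro ⟨x, hx⟩ ⟨y, hy⟩ hxy
    have hxy : G.Adj x y := hxy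
    have hb := bridge_of_not_CE hn G hG huni c hinj hc hxy (hCEno x y ((hS x).1 hx) ((hS y).1 hy) hxy)
    rw [isBridge_iff] at hb ⊢
    intro hr
    apply hb
    refine hr.map (⟨Subtype.val, ?_⟩ :
      ((G.induce (insert (c k) A)).deleteEdges {s(⟨x, hx⟩, ⟨y, hy⟩)}) →g G.deleteEdges {s(x, y)})
    rintro ⟨a, ha⟩ ⟨b, hb⟩ hab
    rw [deleteEdges_adj] at hab ⊢
    refine ⟨hab.1, fun he => hab.2 ?_⟩
    simpa using he
  · have hfS : ∀ x, x ∈ insert (c k) A ↔ f x ∈ insert (c k) A := by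
      intro x
      rw [hS, hS]
      have : (del G c).Reachable (fH x) (fH (c k)) ↔ _ := Iso.reachable_iff (φ := fH)
      rw [← this]
      change (del G c).Reachable (f x) (f (c k)) ↔ _
      rw [hrot]
    refine ⟨⟨f.toEquiv.subtypeEquiv hfS, ?_⟩, ?_, ⟨v, (hS v).2 hk⟩, ?_⟩
    · intro a b
      exact f.map_rel_iff
    · exact Subtype.ext (hrot k)
    · intro h
      exact hv (congrArg Subtype.val h)

end UniK

theorem unicyclic_kernel_iff [Fintype V] (G : SimpleGraph V)
    (hG : G.Connected) (huni : G.edgeSet.ncard = Fintype.card V) :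
    (∃ f : G ≃g G, (∃ v : V, f v ≠ v) ∧ FixesH1 ℤ G f) ↔
      IsPeriodic G ∨
      ∃ (w : V) (A : Set V), IsPendantTree G w A ∧ HasNontrivialRootAut G w A := by
  constructor
  · rintro ⟨f, ⟨v, hv⟩, hf⟩
    exact UniK.kernel_imp G hG huni f v hv hf
  · rintro (h | ⟨w, A, h, h'⟩)
    · exact UniK.periodic_imp G hG huni h
    · exact UniK.pendant_imp G w A h h'
end
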